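/- The spaces of admissible and indecomposable admissible functions in four and five variables have the following dimensions over k: dim R⁴₀ = 3, dim R⁴ = 6, dim R⁵₀ = 16, and dim R⁵ = 26. -/

import Mathlib

open scoped Classical

noncomputable section

namespace Griess

open MvPolynomial

variable {k : Type} [Field k]

/-- The field `k(z₁,…,z_l)` of rational functions over `k` in `l` variables. -/
abbrev RF (k : Type) [Field k] (l : ℕ) : Type := FractionRing (MvPolynomial (Fin l) k)

/-- The variable `zᵢ` as an element of the rational function field. -/
def zv {k : Type} [Field k] {l : ℕ} (i : Fin l) : RF k l :=
  algebraMap (MvPolynomial (Fin l) k) (RF k l) (MvPolynomial.X i)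

/-- The space `Φ^l` of rational functions of the form
`p(z₁,…,z_l) · ∏_{i<j} (zᵢ - z_j)^{k_{ij}}`. -/
def Phi (k : Type) [Field k] (l : ℕ) : Set (RF k l) :=
  { x | ∃ (p : MvPolynomial (Fin l) k) (e : Fin l → Fin l → ℤ),
      x = algebraMap (MvPolynomial (Fin l) k) (RF k l) p *
        ∏ i : Fin l, ∏ j : Fin l, (if i < j then (zv i - zv j) ^ e i j else 1) }

/-- `D` is the family of partial derivative operators `∂_{z₁},…,∂_{z_l}`:
a family of `k`-linear derivations with `D i (z j) = δ_{ij}`. -/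
def IsPartialDeriv {l : ℕ} (D : Fin l → Derivation k (RF k l) (RF k l)) : Prop :=
  ∀ i j : Fin l, D i (zv j) = if j = i then 1 else 0

/-- The operator `Δ = Σᵢ ∂_{zᵢ}`. -/
def Delta {l : ℕ} (D : Fin l → Derivation k (RF k l) (RF k l)) (α : RF k l) : RF k l :=
  ∑ i, D i α

/-- The operator `Δ*(n₁,…,n_l) = Σᵢ (zᵢ² ∂_{zᵢ} + nᵢ zᵢ)`. -/
def DeltaStar {l : ℕ} (D : Fin l → Derivation k (RF k l) (RF k l)) (n : Fin l → ℤ)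
    (α : RF k l) : RF k l :=
  ∑ i, ((zv i) ^ 2 * D i α + (n i : RF k l) * zv i * α)

section Subst

variable {l : ℕ}

/-- The embedding of polynomials in `z₁,…,z_l` into rational functions of
`z₁,…,z_l` and one extra variable `t` (`= RatFunc.X`). -/
def toRatFuncHom (k : Type) [Field k] (l : ℕ) :
    Polynomial (MvPolynomial (Fin l) k) →+* RatFunc (RF k l) :=
  (algebraMap (Polynomial (RF k l)) (RatFunc (RF k l))).comp
    (Polynomial.mapRingHom (algebraMap (MvPolynomial (Fin l) k) (RF k l)))

lemma toRatFuncHom_injective : Function.Injective (toRatFuncHom k l) := by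
  have h1 : Function.Injective (algebraMap (Polynomial (RF k l)) (RatFunc (RF k l))) :=
    IsFractionRing.injective _ _
  have h2 : Function.Injective
      (Polynomial.mapRingHom (algebraMap (MvPolynomial (Fin l) k) (RF k l))) :=
    Polynomial.map_injective _ (IsFractionRing.injective _ _)
  exact fun a b hab => h2 (h1 hab)

/-- Polynomial level substitution `z_j ↦ t·z_j` for `j ∈ J`. -/
def scaleAux (k : Type) [Field k] (l : ℕ) (J : Finset (Fin l)) :
    MvPolynomial (Fin l) k →+* Polynomial (MvPolynomial (Fin l) k) :=
  (MvPolynomial.aeval (R := k) fun i =>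
    if i ∈ J then Polynomial.X * Polynomial.C (MvPolynomial.X i)
    else Polynomial.C (MvPolynomial.X i)).toRingHom

lemma scaleAux_injective (J : Finset (Fin l)) :
    Function.Injective (scaleAux k l J) := by
  have h : (Polynomial.evalRingHom (1 : MvPolynomial (Fin l) k)).comp (scaleAux k l J)
      = RingHom.id _ := by
    apply MvPolynomial.ringHom_ext
    · intro r; simp [scaleAux]
    · intro i; by_cases hi : i ∈ J <;> simp [scaleAux, hi]
  intro p q hpq
  have hp := DFunLike.congr_fun h p
  have hq := DFunLike.congr_fun h q
  simp only [RingHom.comp_apply, RingHom.id_apply] at hp hq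
  rw [← hp, ← hq, hpq]

/-- The substitution `z_j ↦ t·z_j` (for `j ∈ J`), as a map from rational functions
in `z₁,…,z_l` to rational functions in `z₁,…,z_l` and `t`.  Reading off the
coefficients of the Laurent expansion in `t` at `t = 0` of `scaleJ J α` yields the
decomposition of `α` into its homogeneous components with respect to the total degree
in the variables `{z_j : j ∈ J}`, i.e. the expansion of `α` in the domain where the
variables of `J` are much smaller than the remaining variables. -/
def scaleJ (J : Finset (Fin l)) : RF k l →+* RatFunc (RF k l) :=
  IsFractionRing.lift (g := (toRatFuncHom k l).comp (scaleAux k l J))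
    (fun a b hab => scaleAux_injective J (toRatFuncHom_injective hab))

/-- Polynomial level substitution `z_i ↦ z_j + t`. -/
def subPairAux (k : Type) [Field k] (l : ℕ) (i j : Fin l) :
    MvPolynomial (Fin l) k →+* Polynomial (MvPolynomial (Fin l) k) :=
  (MvPolynomial.aeval (R := k) fun s =>
    if s = i then Polynomial.X + Polynomial.C (MvPolynomial.X j)
    else Polynomial.C (MvPolynomial.X s)).toRingHom

lemma subPairAux_injective (i j : Fin l) :
    Function.Injective (subPairAux k l i j) := by
  have h : (Polynomial.evalRingHom (MvPolynomial.X i - MvPolynomial.X j)).comp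
      (subPairAux k l i j) = RingHom.id _ := by
    apply MvPolynomial.ringHom_ext
    · intro r; simp [subPairAux]
    · intro s; by_cases hs : s = i <;> simp [subPairAux, hs]
  intro p q hpq
  have hp := DFunLike.congr_fun h p
  have hq := DFunLike.congr_fun h q
  simp only [RingHom.comp_apply, RingHom.id_apply] at hp hq
  rw [← hp, ← hq, hpq]

/-- The substitution `z_i ↦ z_j + t`, as a map from rational functions in `z₁,…,z_l`
to rational functions in the variables `z₁,…,z_l` and `t`.  Reading off the Laurent
coefficients in `t` at `t = 0` yields the expansion of a rational function in powers
of `z_i - z_j`, with coefficients not involving `z_i`. -/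
def subPair (i j : Fin l) : RF k l →+* RatFunc (RF k l) :=
  IsFractionRing.lift (g := (toRatFuncHom k l).comp (subPairAux k l i j))
    (fun a b hab => subPairAux_injective i j (toRatFuncHom_injective hab))

end Subst

/-- The coefficient of `tᵐ` in the Laurent expansion at `t = 0` of a rational
function of `t`. -/
def lcoeff {L : Type} [Field L] (m : ℤ) (f : RatFunc L) : L :=
  (f : LaurentSeries L).coeff m

/-- The component `(α)_n` of `α` of degree `n` with respect to the partition
`{1,…,l} = Jᶜ ⊔ J` and the weights `d`:  the part of the expansion of `α` in the
domain where the variables of `J` are much smaller than those of `Jᶜ` whose total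
degree in the variables `{z_j : j ∈ J}` equals `n - Σ_{j∈J} d_j`. -/
def component {l : ℕ} (J : Finset (Fin l)) (d : Fin l → ℤ) (n : ℤ) (α : RF k l) :
    RF k l :=
  lcoeff (n - ∑ j ∈ J, d j) (scaleJ J α)

/-- `α` is homogeneous of total degree `d` in the variables `{z_i : i ∈ S}`:
substituting `z_i ↦ t·z_i` for `i ∈ S` multiplies `α` by `t^d`. -/
def IsHomogeneousOn {l : ℕ} (S : Finset (Fin l)) (d : ℤ) (α : RF k l) : Prop :=
  scaleJ S α = RatFunc.X ^ d * RatFunc.C α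

/-- `ρ^{(m)}_{ij} α`: the coefficient of `(z_i - z_j)^m` in the expansion of `α`
in powers of `z_i - z_j` (the coefficients do not involve `z_i`). -/
def rho {l : ℕ} (i j : Fin l) (m : ℤ) (α : RF k l) : RF k l :=
  lcoeff m (subPair i j α)

/-- `α` is a rational function of the variables `{z_i : i ∈ S}` only. -/
def dependsOnlyOn {l : ℕ} (S : Finset (Fin l)) (α : RF k l) : Prop :=
  α ∈ Subfield.closure (Set.range (algebraMap k (RF k l)) ∪ {x | ∃ i ∈ S, x = zv i})

/-- `α` is an admissible function of the variables `{z_i : i ∈ S}` (the space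
`R^{|S|}`):  `α ∈ Φ` is a rational function of the variables of `S` only, it is
`(4,…,4)`-regular and homogeneous of degree `-2|S|` in these variables, and all its
components of negative degree, as well as those of degree `1`, vanish (with respect
to every partition of `S` and all weights equal to `2`). -/
def Admissible {l : ℕ} (D : Fin l → Derivation k (RF k l) (RF k l)) (S : Finset (Fin l))
    (α : RF k l) : Prop :=
  α ∈ Phi k l ∧ dependsOnlyOn S α ∧
    (∑ i ∈ S, ((zv i) ^ 2 * D i α + 4 * zv i * α)) = 0 ∧
    IsHomogeneousOn S (-(2 * (S.card : ℤ))) α ∧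
    ∀ J ⊆ S, ∀ n : ℤ, (n < 0 ∨ n = 1) → component J (fun _ => 2) n α = 0

/-- `α` is an indecomposable admissible function of the variables `{z_i : i ∈ S}`
(the space `R₀^{|S|}`): admissible, and all the components `(α)₀` with respect to
partitions of `S` into two nonempty parts vanish. -/
def AdmissibleInd {l : ℕ} (D : Fin l → Derivation k (RF k l) (RF k l))
    (S : Finset (Fin l)) (α : RF k l) : Prop :=
  Admissible D S α ∧
    ∀ J ⊆ S, J ≠ ∅ → J ≠ S → component J (fun _ => 2) 0 α = 0

section Shift

variable {l : ℕ}

/-- Polynomial level substitution `z_s ↦ z_s - z_t` for `s ∈ S`. -/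
def shiftAuxP (k : Type) [Field k] (l : ℕ) (S : Finset (Fin l)) (t : Fin l) :
    MvPolynomial (Fin l) k →+* MvPolynomial (Fin l) k :=
  (MvPolynomial.aeval (R := k) fun s =>
    if s ∈ S then MvPolynomial.X s - MvPolynomial.X t else MvPolynomial.X s).toRingHom

lemma shiftAuxP_injective (S : Finset (Fin l)) (t : Fin l) (ht : t ∉ S) :
    Function.Injective (shiftAuxP k l S t) := by
  have h : ((MvPolynomial.aeval (R := k) fun s =>
      if s ∈ S then MvPolynomial.X s + MvPolynomial.X t
      else MvPolynomial.X s).toRingHom).comp (shiftAuxP k l S t) = RingHom.id _ := by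
    apply MvPolynomial.ringHom_ext
    · intro r; simp [shiftAuxP]
    · intro s
      by_cases hs : s ∈ S
      · have hst : s ≠ t := fun hst => ht (hst ▸ hs)
        simp [shiftAuxP, hs, ht]
      · simp [shiftAuxP, hs]
  intro p q hpq
  have hp := DFunLike.congr_fun h p
  have hq := DFunLike.congr_fun h q
  simp only [RingHom.comp_apply, RingHom.id_apply] at hp hq
  rw [← hp, ← hq, hpq]

/-- The shift operator substituting `z_s - z_t` for `z_s`, for all `s ∈ S`. -/
def shiftT (S : Finset (Fin l)) (t : Fin l) (ht : t ∉ S) : RF k l →+* RF k l :=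
  IsFractionRing.lift
    (g := (algebraMap (MvPolynomial (Fin l) k) (RF k l)).comp (shiftAuxP k l S t))
    (fun a b hab =>
      shiftAuxP_injective S t ht (IsFractionRing.injective _ _ hab))

/-- The operator `ℰ = Σ_{s ∈ S} (-z_s⁻¹ ∂_{z_s} + 2 z_s⁻²)`. -/
def curlyE {l : ℕ} (D : Fin l → Derivation k (RF k l) (RF k l)) (S : Finset (Fin l))
    (β : RF k l) : RF k l :=
  ∑ s ∈ S, (-((zv s)⁻¹ * D s β) + 2 * (zv s) ^ (-2 : ℤ) * β)

end Shift

end Griess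


namespace Griess

open MvPolynomial

variable {k : Type} [Field k]

section PartA

variable {L : Type} [Field L]

def OrdGE (d : ℤ) (f : RatFunc L) : Prop := ∀ m < d, lcoeff m f = 0

def HasOrd (d : ℤ) (f : RatFunc L) : Prop := f ≠ 0 ∧ (f : LaurentSeries L).order = d

lemma coeL_ne {f : RatFunc L} (h : f ≠ 0) : (f : LaurentSeries L) ≠ 0 := by
  intro h0
  exact h ((map_eq_zero _).1 h0)

lemma ordGE_iff {d : ℤ} {f : RatFunc L} :
    OrdGE d f ↔ (d : WithTop ℤ) ≤ (f : LaurentSeries L).orderTop := by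
  rw [HahnSeries.le_orderTop_iff_forall]
  simp [OrdGE, lcoeff]

lemma OrdGE.mul {d e : ℤ} {f g : RatFunc L} (hf : OrdGE d f) (hg : OrdGE e g) :
    OrdGE (d + e) (f * g) := by
  rw [ordGE_iff] at *
  have : ((f * g : RatFunc L) : LaurentSeries L) = (f : LaurentSeries L) * g := map_mul _ _ _
  rw [this]
  refine le_trans ?_ HahnSeries.orderTop_add_le_mul
  push_cast
  exact add_le_add hf hg

lemma lcoeff_add (m : ℤ) (f g : RatFunc L) : lcoeff m (f + g) = lcoeff m f + lcoeff m g := by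
  simp [lcoeff]

lemma lcoeff_sub (m : ℤ) (f g : RatFunc L) : lcoeff m (f - g) = lcoeff m f - lcoeff m g := by
  simp [lcoeff]

lemma lcoeff_zero (m : ℤ) : lcoeff m (0 : RatFunc L) = 0 := by
  simp [lcoeff]

lemma coeL_C (a : L) : ((RatFunc.C a : RatFunc L) : LaurentSeries L) = HahnSeries.C a := by
  have := RatFunc.coe_coe (Polynomial.C a)
  simp only [RatFunc.coePolynomial] at this
  rw [RatFunc.algebraMap_C] at this
  rw [← this]
  simp

lemma lcoeff_C_mul (m : ℤ) (a : L) (f : RatFunc L) :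
    lcoeff m (RatFunc.C a * f) = a * lcoeff m f := by
  simp only [lcoeff, map_mul, coeL_C]
  rw [HahnSeries.C_mul_eq_smul]
  simp

lemma lcoeff_zpow_mul_C (m d : ℤ) (a : L) :
    lcoeff m (RatFunc.X ^ d * RatFunc.C a) = if m = d then a else 0 := by
  simp only [lcoeff, map_mul, coeL_C, map_zpow₀, RatFunc.coe_X]
  rw [← RatFunc.single_zpow, mul_comm, HahnSeries.C_mul_eq_smul]
  simp only [HahnSeries.coeff_smul, HahnSeries.coeff_single, smul_eq_mul]
  split_ifs <;> simp

lemma lcoeff_poly (m : ℕ) (p : Polynomial L) :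
    lcoeff (m : ℤ) (algebraMap (Polynomial L) (RatFunc L) p) = p.coeff m := by
  have := RatFunc.coe_coe p
  simp only [RatFunc.coePolynomial] at this
  rw [lcoeff, ← this, LaurentSeries.coeff_coe_powerSeries]
  simp

lemma lcoeff_poly_neg (m : ℤ) (hm : m < 0) (p : Polynomial L) :
    lcoeff m (algebraMap (Polynomial L) (RatFunc L) p) = 0 := by
  have := RatFunc.coe_coe p
  simp only [RatFunc.coePolynomial] at this
  rw [lcoeff, ← this, PowerSeries.coeff_coe, if_pos hm]

lemma OrdGE.zero (d : ℤ) : OrdGE d (0 : RatFunc L) := fun m _ => lcoeff_zero m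
lemma OrdGE.add {d : ℤ} {f g : RatFunc L} (hf : OrdGE d f) (hg : OrdGE d g) :
    OrdGE d (f + g) := fun m hm => by rw [lcoeff_add, hf m hm, hg m hm, add_zero]
lemma OrdGE.sub {d : ℤ} {f g : RatFunc L} (hf : OrdGE d f) (hg : OrdGE d g) :
    OrdGE d (f - g) := fun m hm => by rw [lcoeff_sub, hf m hm, hg m hm, sub_zero]
lemma OrdGE.mono {d e : ℤ} {f : RatFunc L} (hf : OrdGE d f) (h : e ≤ d) : OrdGE e f :=
  fun m hm => hf m (lt_of_lt_of_le hm h)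
lemma OrdGE.C_mul {d : ℤ} {f : RatFunc L} (hf : OrdGE d f) (a : L) :
    OrdGE d (RatFunc.C a * f) := fun m hm => by rw [lcoeff_C_mul, hf m hm, mul_zero]

lemma HasOrd.ordGE {d : ℤ} {f : RatFunc L} (h : HasOrd d f) : OrdGE d f := by
  intro m hm
  exact HahnSeries.coeff_eq_zero_of_lt_order (by rw [h.2]; exact hm)

lemma HasOrd.mul {d e : ℤ} {f g : RatFunc L} (hf : HasOrd d f) (hg : HasOrd e g) :
    HasOrd (d + e) (f * g) := by
  refine ⟨mul_ne_zero hf.1 hg.1, ?_⟩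
  rw [map_mul, HahnSeries.order_mul (coeL_ne hf.1) (coeL_ne hg.1), hf.2, hg.2]

lemma HasOrd.one : HasOrd 0 (1 : RatFunc L) := ⟨one_ne_zero, by simp⟩

lemma HasOrd.inv {d : ℤ} {f : RatFunc L} (hf : HasOrd d f) : HasOrd (-d) f⁻¹ := by
  have h : HasOrd ((f⁻¹ : RatFunc L) : LaurentSeries L).order f⁻¹ := ⟨inv_ne_zero hf.1, rfl⟩
  have h2 := (hf.mul h).2
  rw [mul_inv_cancel₀ hf.1, HasOrd.one.2] at h2
  refine ⟨inv_ne_zero hf.1, by omega⟩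

lemma HasOrd.pow {d : ℤ} {f : RatFunc L} (hf : HasOrd d f) (n : ℕ) : HasOrd (n * d) (f ^ n) := by
  induction n with
  | zero => simpa using HasOrd.one
  | succ n ih => rw [pow_succ]; convert ih.mul hf using 1; push_cast; ring

lemma HasOrd.zpow {d : ℤ} {f : RatFunc L} (hf : HasOrd d f) (n : ℤ) : HasOrd (n * d) (f ^ n) := by
  obtain ⟨n, rfl | rfl⟩ := n.eq_nat_or_neg
  · simpa using hf.pow n
  · rw [zpow_neg, zpow_natCast]; convert (hf.pow n).inv using 1; ring

lemma HasOrd.prod {ι : Type} (s : Finset ι) (d : ι → ℤ) (f : ι → RatFunc L)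
    (h : ∀ i ∈ s, HasOrd (d i) (f i)) : HasOrd (∑ i ∈ s, d i) (∏ i ∈ s, f i) := by
  induction s using Finset.induction_on with
  | empty => simpa using HasOrd.one
  | insert a s ha ih =>
    rw [Finset.sum_insert ha, Finset.prod_insert ha]
    exact (h a (by simp)).mul (ih fun i hi => h i (by simp [hi]))

lemma HasOrd.X : HasOrd 1 (RatFunc.X : RatFunc L) := ⟨RatFunc.X_ne_zero, by
  rw [RatFunc.coe_X, HahnSeries.order_single one_ne_zero]⟩

lemma HasOrd.of_poly {p : Polynomial L} (h : p.coeff 0 ≠ 0) :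
    HasOrd 0 (algebraMap (Polynomial L) (RatFunc L) p) := by
  have h0 : lcoeff 0 (algebraMap (Polynomial L) (RatFunc L) p) ≠ 0 := by
    have := lcoeff_poly 0 p
    simp only [Nat.cast_zero] at this
    rwa [this]
  have hne : algebraMap (Polynomial L) (RatFunc L) p ≠ 0 := by
    intro h'; rw [h', lcoeff_zero] at h0; exact h0 rfl
  refine ⟨hne, le_antisymm (HahnSeries.order_le_of_coeff_ne_zero h0) ?_⟩
  rw [HahnSeries.le_order_iff_forall (coeL_ne hne)]
  intro j hj
  exact lcoeff_poly_neg j hj p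

lemma HasOrd.C {a : L} (h : a ≠ 0) : HasOrd 0 (RatFunc.C a : RatFunc L) := by
  rw [← RatFunc.algebraMap_C]; exact HasOrd.of_poly (by simpa using h)

lemma OrdGE.cancel {d e : ℤ} {f g : RatFunc L} (hg : HasOrd e g) (h : OrdGE d (f * g)) :
    OrdGE (d - e) f := by
  have := h.mul hg.inv.ordGE
  rwa [mul_assoc, mul_inv_cancel₀ hg.1, mul_one] at this

end PartA
section PartB

variable {l : ℕ}

def mon (e : Fin l → Fin l → ℤ) : RF k l :=
  ∏ i : Fin l, ∏ j : Fin l, (if i < j then (zv i - zv j) ^ e i j else 1)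

def ordJ (e : Fin l → Fin l → ℤ) (J : Finset (Fin l)) : ℤ :=
  ∑ i : Fin l, ∑ j : Fin l, (if i < j ∧ i ∈ J ∧ j ∈ J then e i j else 0)

def degK (e : Fin l → Fin l → ℤ) (i : Fin l) : ℤ :=
  ∑ j : Fin l, (if i < j then e i j else if j < i then e j i else 0)

def NoCross (e : Fin l → Fin l → ℤ) (J : Finset (Fin l)) : Prop :=
  ∀ i j : Fin l, i < j → ¬ (i ∈ J ↔ j ∈ J) → e i j = 0

/-- polynomials into rational functions -/
abbrev am (k : Type) [Field k] (l : ℕ) : MvPolynomial (Fin l) k →+* RF k l :=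
  algebraMap (MvPolynomial (Fin l) k) (RF k l)

lemma am_inj : Function.Injective (am k l) := IsFractionRing.injective _ _

lemma X_sub_X_ne {i j : Fin l} (h : i ≠ j) : (X i - X j : MvPolynomial (Fin l) k) ≠ 0 := by
  rw [sub_ne_zero]
  exact fun h' => h (MvPolynomial.X_injective h')

lemma zv_sub_eq (i j : Fin l) : (zv i - zv j : RF k l) = am k l (X i - X j) := by
  simp [zv]

lemma zv_sub_ne {i j : Fin l} (h : i ≠ j) : (zv i - zv j : RF k l) ≠ 0 := by
  rw [zv_sub_eq]
  intro h'
  exact X_sub_X_ne h (am_inj (h'.trans (map_zero _).symm))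

lemma zv_ne (i : Fin l) : (zv i : RF k l) ≠ 0 := by
  intro h'
  exact MvPolynomial.X_ne_zero i (am_inj (k := k) (l := l) (h'.trans (map_zero _).symm))

lemma mon_ne (e : Fin l → Fin l → ℤ) : (mon e : RF k l) ≠ 0 := by
  unfold mon
  refine Finset.prod_ne_zero_iff.2 fun i _ => Finset.prod_ne_zero_iff.2 fun j _ => ?_
  split_ifs with h
  · exact zpow_ne_zero _ (zv_sub_ne h.ne)
  · exact one_ne_zero

lemma mon_add (e e' : Fin l → Fin l → ℤ) : (mon (e + e') : RF k l) = mon e * mon e' := by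
  unfold mon
  rw [← Finset.prod_mul_distrib]
  refine Finset.prod_congr rfl fun i _ => ?_
  rw [← Finset.prod_mul_distrib]
  refine Finset.prod_congr rfl fun j _ => ?_
  split_ifs with h
  · exact zpow_add₀ (zv_sub_ne h.ne) _ _
  · simp

lemma mon_zero : (mon (0 : Fin l → Fin l → ℤ) : RF k l) = 1 := by
  simp [mon]

lemma mon_mul_neg (e : Fin l → Fin l → ℤ) : (mon e * mon (-e) : RF k l) = 1 := by
  rw [← mon_add, add_neg_cancel, mon_zero]

/-- polynomial version -/
def pm (k : Type) [Field k] (e : Fin l → Fin l → ℕ) : MvPolynomial (Fin l) k :=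
  ∏ i : Fin l, ∏ j : Fin l, (if i < j then (X i - X j) ^ e i j else 1)

lemma am_pm (e : Fin l → Fin l → ℕ) :
    am k l (pm k e) = mon (fun i j => (e i j : ℤ)) := by
  unfold pm mon
  rw [map_prod]
  refine Finset.prod_congr rfl fun i _ => ?_
  rw [map_prod]
  refine Finset.prod_congr rfl fun j _ => ?_
  split_ifs with h
  · rw [map_pow, zv_sub_eq, zpow_natCast]
  · simp

lemma scaleJ_am (J : Finset (Fin l)) (p : MvPolynomial (Fin l) k) :
    scaleJ J (am k l p) = toRatFuncHom k l (scaleAux k l J p) := by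
  unfold scaleJ
  exact IsFractionRing.lift_algebraMap _ _

lemma scaleJ_zv (J : Finset (Fin l)) (i : Fin l) :
    scaleJ J (zv i : RF k l) = (if i ∈ J then RatFunc.X else 1) * RatFunc.C (zv i : RF k l) := by
  have : (zv i : RF k l) = am k l (X i) := rfl
  rw [this, scaleJ_am]
  by_cases hi : i ∈ J <;> simp [scaleAux, toRatFuncHom, hi, -Polynomial.X_mul_C]

lemma scaleJ_const (J : Finset (Fin l)) (c : k) :
    scaleJ J (algebraMap k (RF k l) c) = RatFunc.C (algebraMap k (RF k l) c) := by
  have : algebraMap k (RF k l) c = am k l (C c) := by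
    rw [IsScalarTower.algebraMap_apply k (MvPolynomial (Fin l) k) (RF k l)]; rfl
  rw [this, scaleJ_am]
  simp [scaleAux, toRatFuncHom]

lemma scaleJ_smul (J : Finset (Fin l)) (c : k) (α : RF k l) :
    scaleJ J (c • α) = RatFunc.C (algebraMap k (RF k l) c) * scaleJ J α := by
  rw [Algebra.smul_def, map_mul, scaleJ_const]

lemma scaleJ_sub_of_iff (J : Finset (Fin l)) (i j : Fin l) (h : i ∈ J ↔ j ∈ J) :
    scaleJ J (zv i - zv j : RF k l) =
      (if i ∈ J ∧ j ∈ J then RatFunc.X else 1) * RatFunc.C (zv i - zv j : RF k l) := by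
  rw [map_sub, scaleJ_zv, scaleJ_zv]
  by_cases hi : i ∈ J
  · have hj := h.1 hi
    simp [hi, hj, mul_sub]
  · have hj : j ∉ J := fun hj => hi (h.2 hj)
    simp [hi, hj]

lemma hasOrd_sub (J : Finset (Fin l)) (i j : Fin l) (hij : i ≠ j) :
    HasOrd (if i ∈ J ∧ j ∈ J then 1 else 0) (scaleJ J (zv i - zv j : RF k l)) := by
  by_cases h : i ∈ J ↔ j ∈ J
  · rw [scaleJ_sub_of_iff J i j h]
    have hC := HasOrd.C (zv_sub_ne (k := k) hij)
    split_ifs with h2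
    · simpa using HasOrd.X.mul hC
    · simpa using hC
  · have h2 : ¬ (i ∈ J ∧ j ∈ J) := by tauto
    rw [if_neg h2, map_sub, scaleJ_zv, scaleJ_zv]
    by_cases hi : i ∈ J
    · have hj : j ∉ J := by tauto
      simp only [hi, hj, if_true, if_false, one_mul]
      have : (RatFunc.X * RatFunc.C (zv i : RF k l) - RatFunc.C (zv j : RF k l) : RatFunc (RF k l)) =
        algebraMap _ _ (Polynomial.X * Polynomial.C (zv i : RF k l) - Polynomial.C (zv j : RF k l)) := by simp [-Polynomial.X_mul_C]
      rw [this]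
      apply HasOrd.of_poly
      simpa using zv_ne j
    · have hj : j ∈ J := by tauto
      simp only [hi, hj, if_true, if_false, one_mul]
      have : (RatFunc.C (zv i : RF k l) - RatFunc.X * RatFunc.C (zv j : RF k l) : RatFunc (RF k l)) =
        algebraMap _ _ (Polynomial.C (zv i : RF k l) - Polynomial.X * Polynomial.C (zv j : RF k l)) := by simp [-Polynomial.X_mul_C]
      rw [this]
      apply HasOrd.of_poly
      simpa using zv_ne i

lemma hasOrd_mon (J : Finset (Fin l)) (e : Fin l → Fin l → ℤ) :
    HasOrd (ordJ e J) (scaleJ J (mon e : RF k l)) := by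
  unfold ordJ mon
  rw [map_prod]
  refine HasOrd.prod _ _ _ fun i _ => ?_
  rw [map_prod]
  refine HasOrd.prod _ _ _ fun j _ => ?_
  by_cases h : i < j
  · simp only [h, if_true, true_and]
    rw [map_zpow₀]
    convert (hasOrd_sub J i j h.ne).zpow (e i j) using 1
    split_ifs <;> simp
  · simpa [h] using HasOrd.one

lemma scaleJ_mon_noCross (J : Finset (Fin l)) (e : Fin l → Fin l → ℤ) (h : NoCross e J) :
    scaleJ J (mon e : RF k l) = RatFunc.X ^ ordJ e J * RatFunc.C (mon e : RF k l) := by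
  have hX : ∀ (s : Finset (Fin l)) (f : Fin l → ℤ),
      (RatFunc.X : RatFunc (RF k l)) ^ (∑ i ∈ s, f i) = ∏ i ∈ s, RatFunc.X ^ f i := by
    intro s f
    induction s using Finset.induction_on with
    | empty => simp
    | insert a s ha ih =>
      rw [Finset.sum_insert ha, Finset.prod_insert ha, zpow_add₀ RatFunc.X_ne_zero, ih]
  unfold ordJ mon
  rw [map_prod, map_prod, hX, ← Finset.prod_mul_distrib]
  refine Finset.prod_congr rfl fun i _ => ?_
  rw [map_prod, map_prod, hX, ← Finset.prod_mul_distrib]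
  refine Finset.prod_congr rfl fun j _ => ?_
  by_cases hij : i < j
  · simp only [hij, if_true, true_and]
    by_cases hc : i ∈ J ↔ j ∈ J
    · rw [map_zpow₀, scaleJ_sub_of_iff J i j hc, mul_zpow, map_zpow₀]
      split_ifs <;> simp
    · have h2 : ¬ (i ∈ J ∧ j ∈ J) := by tauto
      rw [h i j hij hc]; simp
  · simp [hij]

lemma component_add (J : Finset (Fin l)) (d : Fin l → ℤ) (n : ℤ) (α β : RF k l) :
    component J d n (α + β) = component J d n α + component J d n β := by
  simp [component, lcoeff_add]

lemma component_smul (J : Finset (Fin l)) (d : Fin l → ℤ) (n : ℤ) (c : k) (α : RF k l) :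
    component J d n (c • α) = c • component J d n α := by
  rw [component, scaleJ_smul, lcoeff_C_mul, Algebra.smul_def]; rfl

def componentL (J : Finset (Fin l)) (d : Fin l → ℤ) (n : ℤ) : RF k l →ₗ[k] RF k l where
  toFun := component J d n
  map_add' := component_add J d n
  map_smul' := component_smul J d n

end PartB
section PartC

variable {l : ℕ}

/-- translations, polynomial level -/
def fP (k : Type) [Field k] (l : ℕ) : Derivation k (MvPolynomial (Fin l) k) (MvPolynomial (Fin l) k) :=
  mkDerivation k (fun _ => 1)
/-- special conformal, polynomial level -/
def dP (k : Type) [Field k] (l : ℕ) : Derivation k (MvPolynomial (Fin l) k) (MvPolynomial (Fin l) k) :=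
  mkDerivation k (fun i => X i ^ 2)
/-- Euler, polynomial level -/
def eP (k : Type) [Field k] (l : ℕ) : Derivation k (MvPolynomial (Fin l) k) (MvPolynomial (Fin l) k) :=
  mkDerivation k (fun i => X i)

@[simp] lemma fP_X (i : Fin l) : fP k l (X i) = 1 := by simp [fP]
@[simp] lemma dP_X (i : Fin l) : dP k l (X i) = X i ^ 2 := by simp [dP]
@[simp] lemma eP_X (i : Fin l) : eP k l (X i) = X i := by simp [eP]

def fD (D : Fin l → Derivation k (RF k l) (RF k l)) : Derivation k (RF k l) (RF k l) := ∑ i, D i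
def dD (D : Fin l → Derivation k (RF k l) (RF k l)) : Derivation k (RF k l) (RF k l) :=
  ∑ i, (zv i : RF k l) ^ 2 • D i

lemma der_sum_apply {ι : Type} (s : Finset ι) (F : ι → Derivation k (RF k l) (RF k l)) (x : RF k l) :
    (∑ i ∈ s, F i) x = ∑ i ∈ s, F i x := by
  induction s using Finset.induction_on with
  | empty => simp
  | insert a s ha ih => rw [Finset.sum_insert ha, Finset.sum_insert ha, Derivation.add_apply, ih]

lemma dD_apply (D : Fin l → Derivation k (RF k l) (RF k l)) (x : RF k l) :
    dD D x = ∑ i, (zv i : RF k l) ^ 2 * D i x := by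
  simp [dD, der_sum_apply]

lemma fD_zv {D : Fin l → Derivation k (RF k l) (RF k l)} (h : IsPartialDeriv D) (j : Fin l) :
    fD D (zv j) = 1 := by
  have h' : ∀ i j : Fin l, D i (zv j) = if j = i then 1 else 0 := h
  simp [fD, der_sum_apply, h']

lemma dD_zv {D : Fin l → Derivation k (RF k l) (RF k l)} (h : IsPartialDeriv D) (j : Fin l) :
    dD D (zv j) = zv j ^ 2 := by
  have h' : ∀ i j : Fin l, D i (zv j) = if j = i then 1 else 0 := h
  simp [dD_apply, h']

lemma der_am (d : Derivation k (RF k l) (RF k l))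
    (d' : Derivation k (MvPolynomial (Fin l) k) (MvPolynomial (Fin l) k))
    (h : ∀ i, d (zv i) = am k l (d' (X i))) (p : MvPolynomial (Fin l) k) :
    d (am k l p) = am k l (d' p) := by
  induction p using MvPolynomial.induction_on with
  | C a =>
    have : am k l (C a) = algebraMap k (RF k l) a := by
      rw [IsScalarTower.algebraMap_apply k (MvPolynomial (Fin l) k) (RF k l)]; rfl
    rw [this, Derivation.map_algebraMap]
    have : (C a : MvPolynomial (Fin l) k) = algebraMap _ _ a := rfl
    rw [this, Derivation.map_algebraMap, map_zero]
  | add p q hp hq => simp only [map_add, hp, hq]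
  | mul_X p i hp =>
    have hX : am k l (X i) = zv i := rfl
    simp only [map_mul, Derivation.leibniz, map_add, smul_eq_mul, hp, hX, h]

lemma fD_am {D : Fin l → Derivation k (RF k l) (RF k l)} (h : IsPartialDeriv D)
    (p : MvPolynomial (Fin l) k) : fD D (am k l p) = am k l (fP k l p) :=
  der_am _ _ (fun i => by rw [fD_zv h, fP_X, map_one]) p

lemma dD_am {D : Fin l → Derivation k (RF k l) (RF k l)} (h : IsPartialDeriv D)
    (p : MvPolynomial (Fin l) k) : dD D (am k l p) = am k l (dP k l p) :=
  der_am _ _ (fun i => by rw [dD_zv h, dP_X, map_pow]; rfl) p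

lemma der_prod {ι : Type} (s : Finset ι) (d : Derivation k (RF k l) (RF k l))
    (F G : ι → RF k l) (h : ∀ i ∈ s, d (F i) = G i * F i) :
    d (∏ i ∈ s, F i) = (∑ i ∈ s, G i) * ∏ i ∈ s, F i := by
  induction s using Finset.induction_on with
  | empty => simp
  | insert a s ha ih =>
    rw [Finset.prod_insert ha, Finset.sum_insert ha, Derivation.leibniz,
      ih fun i hi => h i (by simp [hi]), h a (by simp)]
    simp only [smul_eq_mul]; ring

lemma der_zpow (d : Derivation k (RF k l) (RF k l)) (x c : RF k l) (hx : x ≠ 0)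
    (h : d x = c * x) (n : ℤ) : d (x ^ n) = ((n : RF k l) * c) * x ^ n := by
  have hnat : ∀ n : ℕ, d (x ^ n) = ((n : RF k l) * c) * x ^ n := by
    intro n
    induction n with
    | zero => simp
    | succ n ih => rw [pow_succ, Derivation.leibniz, ih, h]; simp only [smul_eq_mul]; push_cast; ring
  obtain ⟨n, rfl | rfl⟩ := n.eq_nat_or_neg
  · simpa using hnat n
  · rw [zpow_neg, zpow_natCast, Derivation.leibniz_inv, hnat]
    have : x ^ n ≠ 0 := pow_ne_zero _ hx
    simp only [smul_eq_mul]; push_cast; field_simp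

lemma der_mon (d : Derivation k (RF k l) (RF k l)) (c : Fin l → Fin l → RF k l)
    (h : ∀ i j, d (zv i - zv j) = c i j * (zv i - zv j)) (e : Fin l → Fin l → ℤ) :
    d (mon e) = (∑ i : Fin l, ∑ j : Fin l, if i < j then (e i j : RF k l) * c i j else 0) * mon e := by
  unfold mon
  refine der_prod _ _ _ _ fun i _ => der_prod _ _ _ _ fun j _ => ?_
  split_ifs with hij
  · exact der_zpow d _ _ (zv_sub_ne hij.ne) (h i j) _
  · simp

lemma fD_mon {D : Fin l → Derivation k (RF k l) (RF k l)} (h : IsPartialDeriv D)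
    (e : Fin l → Fin l → ℤ) : fD D (mon e) = 0 := by
  rw [der_mon (fD D) (fun _ _ => 0) (fun i j => by simp [fD_zv h])]
  simp

lemma sum_deg (e : Fin l → Fin l → ℤ) (x : Fin l → RF k l) :
    (∑ i : Fin l, ∑ j : Fin l, if i < j then (e i j : RF k l) * (x i + x j) else 0)
      = ∑ i, (degK e i : RF k l) * x i := by
  have h1 : (∑ i : Fin l, ∑ j : Fin l, if i < j then (e i j : RF k l) * (x i + x j) else 0)
    = (∑ i : Fin l, ∑ j : Fin l, if i < j then (e i j : RF k l) * x i else 0)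
      + (∑ i : Fin l, ∑ j : Fin l, if i < j then (e i j : RF k l) * x j else 0) := by
    simp only [← Finset.sum_add_distrib]
    refine Finset.sum_congr rfl fun i _ => Finset.sum_congr rfl fun j _ => ?_
    split_ifs <;> ring
  rw [h1, Finset.sum_comm (f := fun i j => if i < j then (e i j : RF k l) * x j else 0),
    ← Finset.sum_add_distrib]
  refine Finset.sum_congr rfl fun i _ => ?_
  rw [degK]
  push_cast
  rw [Finset.sum_mul, ← Finset.sum_add_distrib]
  refine Finset.sum_congr rfl fun j _ => ?_
  rcases lt_trichotomy i j with hij | hij | hij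
  · simp [hij, hij.not_gt]
  · simp [hij]
  · simp [hij, hij.not_gt]

lemma dD_mon {D : Fin l → Derivation k (RF k l) (RF k l)} (h : IsPartialDeriv D)
    (e : Fin l → Fin l → ℤ) : dD D (mon e) = (∑ i, (degK e i : RF k l) * zv i) * mon e := by
  rw [der_mon (dD D) (fun i j => zv i + zv j) (fun i j => by simp [dD_zv h]; ring), sum_deg]

/-- linear form -/
def lin (k : Type) [Field k] (b : Fin l → ℤ) : MvPolynomial (Fin l) k :=
  ∑ i, (b i : MvPolynomial (Fin l) k) * X i

lemma am_lin (b : Fin l → ℤ) : am k l (lin k b) = ∑ i, (b i : RF k l) * zv i := by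
  simp [lin, zv]

lemma fD_amon {D : Fin l → Derivation k (RF k l) (RF k l)} (h : IsPartialDeriv D)
    (e : Fin l → Fin l → ℤ) (Q : MvPolynomial (Fin l) k) :
    fD D (am k l Q * mon e) = 0 ↔ fP k l Q = 0 := by
  rw [Derivation.leibniz, fD_mon h, fD_am h, smul_zero, zero_add, smul_eq_mul,
    mul_eq_zero, or_iff_right (mon_ne e), map_eq_zero_iff _ am_inj]

lemma dD_amon {D : Fin l → Derivation k (RF k l) (RF k l)} (h : IsPartialDeriv D)
    (e : Fin l → Fin l → ℤ) (Q : MvPolynomial (Fin l) k) :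
    (∑ i, ((zv i) ^ 2 * D i (am k l Q * mon e) + 4 * zv i * (am k l Q * mon e))) = 0 ↔
      dP k l Q = lin k (fun i => -4 - degK e i) * Q := by
  rw [Finset.sum_add_distrib, ← dD_apply, Derivation.leibniz, dD_mon h, dD_am h]
  have hl : am k l (lin k (fun i => -4 - degK e i)) =
      - ∑ i, (4 * zv i) - ∑ i, (degK e i : RF k l) * zv i := by
    rw [am_lin, ← Finset.sum_neg_distrib, ← Finset.sum_sub_distrib]
    refine Finset.sum_congr rfl fun i _ => ?_
    push_cast; ring
  rw [← Finset.sum_mul]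
  rw [← am_inj.eq_iff (a := dP k l Q), map_mul, hl]
  simp only [smul_eq_mul]
  constructor
  · intro h
    apply mul_right_cancel₀ (mon_ne e)
    linear_combination h
  · intro h
    linear_combination (mon e) * h

end PartC
section PartD

variable {l : ℕ}

lemma depends_univ (α : RF k l) : dependsOnlyOn Finset.univ α := by
  unfold dependsOnlyOn
  set F := Subfield.closure (Set.range (algebraMap k (RF k l)) ∪ {x | ∃ i ∈ Finset.univ, x = zv i})
  have hp : ∀ p : MvPolynomial (Fin l) k, am k l p ∈ F := by
    intro p
    induction p using MvPolynomial.induction_on with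
    | C a =>
      have : am k l (C a) = algebraMap k (RF k l) a := by
        rw [IsScalarTower.algebraMap_apply k (MvPolynomial (Fin l) k) (RF k l)]; rfl
      rw [this]
      exact Subfield.subset_closure (Or.inl ⟨a, rfl⟩)
    | add p q hp hq => rw [map_add]; exact F.add_mem hp hq
    | mul_X p i hp =>
      rw [map_mul]
      exact F.mul_mem hp (Subfield.subset_closure (Or.inr ⟨i, Finset.mem_univ _, rfl⟩))
  obtain ⟨a, b, _, rfl⟩ := IsFractionRing.div_surjective (A := MvPolynomial (Fin l) k) α
  exact F.div_mem (hp a) (hp b)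

def GoodK (e : Fin l → Fin l → ℤ) : Prop :=
  (∀ i, degK e i = -4) ∧ ordJ e Finset.univ = -(2 * l) ∧
    ∀ J : Finset (Fin l), (NoCross e J ∧ ordJ e J = -2 * J.card) ∨ -2 * J.card + 2 ≤ ordJ e J

def GoodI (e : Fin l → Fin l → ℤ) : Prop :=
  ∀ J : Finset (Fin l), J ≠ ∅ → J ≠ Finset.univ → -2 * J.card + 2 ≤ ordJ e J

lemma sum_two (J : Finset (Fin l)) : ∑ _j ∈ J, (2 : ℤ) = 2 * J.card := by
  simp [mul_comm]

lemma component_of_ge (e : Fin l → Fin l → ℤ) (J : Finset (Fin l)) (n : ℤ) (hn : n ≤ 1)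
    (h : -2 * J.card + 2 ≤ ordJ e J) : component J (fun _ => 2) n (mon e : RF k l) = 0 := by
  rw [component, sum_two]
  exact (hasOrd_mon J e).ordGE _ (by linarith)

lemma component_of_noCross (e : Fin l → Fin l → ℤ) (J : Finset (Fin l)) (n : ℤ)
    (h : NoCross e J) (h2 : ordJ e J = -2 * J.card) :
    component J (fun _ => 2) n (mon e : RF k l) = if n = 0 then mon e else 0 := by
  rw [component, sum_two, scaleJ_mon_noCross J e h, lcoeff_zpow_mul_C, h2]
  congr 1
  simp only [eq_iff_iff]
  constructor <;> intro h <;> linarith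

lemma admissible_mon {D : Fin l → Derivation k (RF k l) (RF k l)} (h : IsPartialDeriv D)
    {e : Fin l → Fin l → ℤ} (he : GoodK e) : Admissible D Finset.univ (mon e : RF k l) := by
  refine ⟨⟨1, e, by rw [map_one, one_mul]; rfl⟩, depends_univ _, ?_, ?_, ?_⟩
  · have := (dD_amon h e 1).2 (by simp [lin, he.1])
    simpa using this
  · unfold IsHomogeneousOn
    rw [scaleJ_mon_noCross _ _ (fun i j _ hij => absurd (by simp) hij), he.2.1]
    simp
  · intro J _ n hn
    rcases he.2.2 J with ⟨h1, h2⟩ | h1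
    · rw [component_of_noCross e J n h1 h2, if_neg]
      rintro rfl
      simp at hn
    · exact component_of_ge e J n (by rcases hn with hn | hn <;> linarith) h1

lemma admissibleInd_mon {D : Fin l → Derivation k (RF k l) (RF k l)} (h : IsPartialDeriv D)
    {e : Fin l → Fin l → ℤ} (he : GoodK e) (hi : GoodI e) :
    AdmissibleInd D Finset.univ (mon e : RF k l) :=
  ⟨admissible_mon h he, fun J _ h1 h2 => component_of_ge e J 0 (by norm_num) (hi J h1 h2)⟩

end PartD
section PartE

variable {l : ℕ}

local notation "RR" => MvPolynomial (Fin l) k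

lemma polyder_sum_apply {ι : Type} (s : Finset ι) (F : ι → Derivation k RR RR) (x : RR) :
    (∑ i ∈ s, F i) x = ∑ i ∈ s, F i x := by
  induction s using Finset.induction_on with
  | empty => simp
  | insert a s ha ih => rw [Finset.sum_insert ha, Finset.sum_insert ha, Derivation.add_apply, ih]

lemma der_eq_sum (d : Derivation k RR RR) (p : RR) : d p = ∑ i, d (X i) * pderiv i p := by
  have : d = ∑ i, d (X i) • pderiv i := by
    apply MvPolynomial.derivation_ext
    intro j
    rw [polyder_sum_apply]
    simp [pderiv_X, Pi.single_apply]
  conv_lhs => rw [this]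
  rw [polyder_sum_apply]; simp

lemma fP_eq (p : RR) : fP k l p = ∑ i, pderiv i p := by rw [der_eq_sum]; simp
lemma dP_eq (p : RR) : dP k l p = ∑ i, X i ^ 2 * pderiv i p := by rw [der_eq_sum]; simp
lemma eP_eq (p : RR) : eP k l p = ∑ i, X i * pderiv i p := by rw [der_eq_sum]; simp

lemma comm_fd (p : RR) : fP k l (dP k l p) = dP k l (fP k l p) + 2 * eP k l p := by
  have : ⁅fP k l, dP k l⁆ = (2 : RR) • eP k l := by
    apply MvPolynomial.derivation_ext
    intro j
    simp [Derivation.commutator_apply, Derivation.leibniz_pow]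
  have h := DFunLike.congr_fun this p
  rw [Derivation.commutator_apply] at h
  simp only [Derivation.smul_apply, smul_eq_mul] at h
  linear_combination h

lemma comm_fe (p : RR) : fP k l (eP k l p) = eP k l (fP k l p) + fP k l p := by
  have : ⁅fP k l, eP k l⁆ = fP k l := by
    apply MvPolynomial.derivation_ext
    intro j
    simp [Derivation.commutator_apply]
  have h := DFunLike.congr_fun this p
  rw [Derivation.commutator_apply] at h
  linear_combination h

lemma fP_lin (b : Fin l → ℤ) : fP k l (lin k b) = ((∑ i, b i : ℤ) : RR) := by
  simp [lin]

lemma fP_homog {n : ℕ} {p : RR} (h : p.IsHomogeneous n) : (fP k l p).IsHomogeneous (n - 1) := by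
  rw [fP_eq]
  exact IsHomogeneous.sum _ _ _ fun i _ => h.pderiv

lemma eP_homog {n : ℕ} {p : RR} (h : p.IsHomogeneous n) : eP k l p = (n : RR) * p := by
  rw [eP_eq, h.sum_X_mul_pderiv, nsmul_eq_mul]

lemma fP_of_homog [CharZero k] {N : ℕ} {p : RR} {b : Fin l → ℤ} (h : p.IsHomogeneous N)
    (hd : dP k l p = lin k b * p) (hb : 2 * (N : ℤ) = ∑ i, b i) : fP k l p = 0 := by
  have hN : ((2 * N : ℤ) : RR) = ((∑ i, b i : ℤ) : RR) := by rw [hb]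
  push_cast at hN
  set g : ℕ → RR := fun m => (fP k l)^[m] p with hg
  have g0 : g 0 = p := rfl
  have gs : ∀ m, g (m + 1) = fP k l (g m) := fun m => Function.iterate_succ_apply' _ _ _
  have he : ∀ m, eP k l (g m) = ((N : RR) - m) * g m := by
    intro m
    induction m with
    | zero => rw [g0, eP_homog h]; simp
    | succ m ih =>
      have h1 := comm_fe (g m)
      have hc : fP k l ((N : RR) - m) = 0 := by simp
      rw [ih, Derivation.leibniz, hc, ← gs] at h1
      simp only [smul_eq_mul] at h1
      push_cast
      linear_combination -h1
  have hdd : ∀ m, dP k l (g (m + 1)) = lin k b * g (m + 1) + ((m : RR) + 1) * m * g m := by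
    intro m
    induction m with
    | zero =>
      have h1 := comm_fd (g 0)
      have h2 := he 0
      rw [h2, g0, hd, Derivation.leibniz, fP_lin, ← g0, ← gs] at h1
      simp only [smul_eq_mul] at h1
      push_cast at h1 ⊢
      linear_combination -h1 - g 0 * hN
    | succ m ih =>
      have h1 := comm_fd (g (m + 1))
      have h2 := he (m + 1)
      have hc : fP k l (((m : RR) + 1) * m) = 0 := by simp
      rw [h2, ih, map_add, Derivation.leibniz, Derivation.leibniz, hc, fP_lin, ← gs, ← gs] at h1
      simp only [smul_eq_mul] at h1
      push_cast at h1 ⊢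
      linear_combination -h1 - g (m + 1) * hN
  have hhom : ∀ m, (g m).IsHomogeneous (N - m) := by
    intro m
    induction m with
    | zero => rw [g0]; exact h
    | succ m ih => rw [gs]; exact fP_homog ih
  have hend : g (N + 1) = 0 := by
    have h1 := hhom N
    rw [Nat.sub_self] at h1
    have h2 : ∃ c, g N = C c := ⟨_, totalDegree_eq_zero_iff_eq_C.1 (by
      by_cases h0 : g N = 0
      · rw [h0]; simp
      · exact h1.totalDegree h0)⟩
    obtain ⟨c, hc⟩ := h2
    rw [gs, hc]
    exact Derivation.map_algebraMap _ _
  have hdown : ∀ m, g (m + 2) = 0 → g (m + 1) = 0 := by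
    intro m hm
    have h1 := hdd (m + 1)
    rw [hm] at h1
    simp only [map_zero, mul_zero, zero_add] at h1
    have h2 : (((m + 1 : ℕ) : RR) + 1) * ((m + 1 : ℕ) : RR) ≠ 0 := by
      apply mul_ne_zero
      · exact_mod_cast Nat.succ_ne_zero (m + 1)
      · exact_mod_cast Nat.succ_ne_zero m
    exact (mul_eq_zero.1 h1.symm).resolve_left h2
  have hall : ∀ m, g (m + 1) = 0 → g 1 = 0 := by
    intro m
    induction m with
    | zero => exact id
    | succ m ih => exact fun h => ih (hdown m h)
  exact hall N hend

lemma lemmaT [CharZero k] {g : RR} {j : Fin l} (hf : fP k l g = 0) (hX : X j ∣ g) : g = 0 := by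
  by_contra h0
  obtain ⟨n, u, hu, hgu⟩ := WfDvdMonoid.max_power_factor h0 (MvPolynomial.X_prime (R := k) (i := j)).irreducible
  cases n with
  | zero => rw [pow_zero, one_mul] at hgu; exact hu (hgu ▸ hX)
  | succ n =>
    rw [hgu, Derivation.leibniz, Derivation.leibniz_pow] at hf
    simp only [smul_eq_mul, fP_X, nsmul_eq_mul, Nat.add_sub_cancel, mul_one] at hf
    have h2 : (X j : RR) ^ n * (X j * fP k l u + ((n + 1 : ℕ) : RR) * u) = 0 := by
      linear_combination hf
    have h3 := (mul_eq_zero.1 h2).resolve_left (pow_ne_zero _ (X_ne_zero j))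
    have h4 : (X j : RR) ∣ C ((n + 1 : ℕ) : k) * u := by
      refine ⟨- fP k l u, ?_⟩
      rw [map_natCast]
      linear_combination h3
    apply hu
    have hne : ((n + 1 : ℕ) : k) ≠ 0 := Nat.cast_ne_zero.2 (Nat.succ_ne_zero n)
    have := h4.mul_left (C (((n + 1 : ℕ) : k)⁻¹))
    rwa [← mul_assoc, ← C_mul, inv_mul_cancel₀ hne, C_1, one_mul] at this

/-- merging map -/
def sg (k : Type) [Field k] (i j : Fin l) : MvPolynomial (Fin l) k →ₐ[k] MvPolynomial (Fin l) k :=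
  aeval (fun s => if s = i then X j else X s)

@[simp] lemma sg_X (i j s : Fin l) : sg k i j (X s) = if s = i then X j else X s := by
  simp [sg]

lemma der_hom (d : Derivation k RR RR) (φ : RR →ₐ[k] RR) (h : ∀ s, d (φ (X s)) = φ (d (X s)))
    (p : RR) : d (φ p) = φ (d p) := by
  induction p using MvPolynomial.induction_on with
  | C a =>
    have : (C a : RR) = algebraMap k RR a := rfl
    rw [this, AlgHom.commutes, Derivation.map_algebraMap, map_zero]
  | add p q hp hq => simp only [map_add, hp, hq]
  | mul_X p i hp => simp only [map_mul, Derivation.leibniz, map_add, smul_eq_mul, hp, h]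

lemma fP_sg (i j : Fin l) (p : RR) : fP k l (sg k i j p) = sg k i j (fP k l p) :=
  der_hom _ _ (fun s => by rw [sg_X]; split_ifs <;> simp) p
lemma dP_sg (i j : Fin l) (p : RR) : dP k l (sg k i j p) = sg k i j (dP k l p) :=
  der_hom _ _ (fun s => by rw [sg_X, dP_X, map_pow, sg_X]; split_ifs <;> simp) p

lemma sub_sg_dvd (i j : Fin l) (p : RR) : X i - X j ∣ p - sg k i j p := by
  induction p using MvPolynomial.induction_on with
  | C a => simp [sg]
  | add p q hp hq => rw [map_add, add_sub_add_comm]; exact dvd_add hp hq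
  | mul_X p s hp =>
    rw [map_mul, sg_X]
    split_ifs with h
    · subst h
      have : p * X s - sg k s j p * X j = (p - sg k s j p) * X s + sg k s j p * (X s - X j) := by ring
      rw [this]
      exact dvd_add (hp.mul_right _) (dvd_mul_left _ _)
    · rw [← sub_mul]; exact hp.mul_right _

lemma dvd_of_sg (i j : Fin l) {p : RR} (h : sg k i j p = 0) : X i - X j ∣ p := by
  have := sub_sg_dvd i j p
  rwa [h, sub_zero] at this

/-- invariants -/
def Inv (k : Type) [Field k] (b : Fin l → ℤ) : Submodule k (MvPolynomial (Fin l) k) where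
  carrier := {Q | fP k l Q = 0 ∧ dP k l Q = lin k b * Q}
  add_mem' := fun {a c} ha hc => ⟨by rw [map_add, ha.1, hc.1, add_zero],
    by rw [map_add, ha.2, hc.2, mul_add]⟩
  zero_mem' := ⟨by simp, by simp⟩
  smul_mem' := fun r a ha => ⟨by rw [Derivation.map_smul, ha.1, smul_zero],
    by rw [Derivation.map_smul, ha.2, mul_smul_comm]⟩

lemma mem_Inv {b : Fin l → ℤ} {Q : RR} : Q ∈ Inv k b ↔ fP k l Q = 0 ∧ dP k l Q = lin k b * Q := Iff.rfl

lemma coeff_Xp (n : Fin l →₀ ℕ) (s : Fin l) (Q : RR) :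
    coeff n (X s * pderiv s Q) = (n s : k) * coeff n Q := by
  rw [coeff_X_mul']
  split_ifs with h
  · rw [coeff_pderiv]
    have h1 : 1 ≤ n s := Nat.one_le_iff_ne_zero.2 (Finsupp.mem_support_iff.1 h)
    have h2 : n - Finsupp.single s 1 + Finsupp.single s 1 = n := by
      ext t; by_cases ht : s = t
      · subst ht; simp; omega
      · simp [ht]
    rw [h2]
    have h3 : (((n - Finsupp.single s 1 : Fin l →₀ ℕ) s : ℕ) : k) + 1 = (n s : k) := by
      have : (n - Finsupp.single s 1 : Fin l →₀ ℕ) s + 1 = n s := by simp; omega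
      exact_mod_cast congrArg (Nat.cast (R := k)) this
    rw [h3]; ring
  · have : n s = 0 := by simpa using h
    rw [this]; simp

lemma degree_Inv [CharZero k] {b : Fin l → ℤ} {Q : RR} (hQ : Q ∈ Inv k b) (h0 : Q ≠ 0) (i : Fin l) :
    (degreeOf i Q : ℤ) = b i := by
  obtain ⟨m, hm, hmi⟩ : ∃ m ∈ Q.support, m i = degreeOf i Q := by
    rw [degreeOf_eq_sup]
    obtain ⟨m, hm, h⟩ := Finset.exists_mem_eq_sup Q.support (by simpa using h0) (fun m => m i)
    exact ⟨m, hm, h.symm⟩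
  have hmax : ∀ n : Fin l →₀ ℕ, degreeOf i Q < n i → coeff n Q = 0 := by
    intro n hn
    by_contra h
    exact absurd (monomial_le_degreeOf i (mem_support_iff.2 h)) (not_le.2 hn)
  have h := congrArg (coeff (m + Finsupp.single i 1)) hQ.2
  rw [dP_eq, lin, Finset.sum_mul, coeff_sum, coeff_sum] at h
  have key : ∀ (P : RR) (c : k) (s : Fin l), s ≠ i → (∀ n : Fin l →₀ ℕ, coeff n Q = 0 → coeff n P = 0) →
      coeff (m + Finsupp.single i 1) (X s * P) = 0 := by
    intro P c s hs hP
    rw [coeff_X_mul']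
    split_ifs with h
    · apply hP; apply hmax
      have : i ≠ s := Ne.symm hs
      simp [hs, hmi]
    · rfl
  have hcoe : ∀ (z : ℤ) (P : RR) (n : Fin l →₀ ℕ), coeff n ((z : RR) * P) = (z : k) * coeff n P := by
    intro z P n
    rw [← coeff_C_mul]; simp
  rw [Finset.sum_eq_single i, Finset.sum_eq_single i] at h
  · rw [pow_two, mul_assoc, add_comm, coeff_X_mul, coeff_Xp, mul_assoc, hcoe, coeff_X_mul] at h
    have hc : coeff m Q ≠ 0 := mem_support_iff.1 hm
    have h2 := mul_right_cancel₀ hc h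
    rw [hmi] at h2
    exact_mod_cast h2
  · intro s _ hs
    rw [mul_assoc, hcoe, key Q 0 s hs (fun _ h => h), mul_zero]
  · simp
  · intro s _ hs
    rw [pow_two, mul_assoc]
    exact key _ 0 s hs (fun n hn => by rw [coeff_Xp, hn, mul_zero])
  · simp

lemma Inv_neg [CharZero k] {b : Fin l → ℤ} {i : Fin l} (h : b i < 0) : Inv k b = ⊥ := by
  rw [eq_bot_iff]
  intro Q hQ
  by_contra h0
  have := degree_Inv hQ h0 i
  omega

def merge (b : Fin l → ℤ) (i j : Fin l) : Fin l → ℤ :=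
  Function.update (Function.update b i 0) j (b i + b j)
def lower (b : Fin l → ℤ) (i j : Fin l) : Fin l → ℤ :=
  Function.update (Function.update b i (b i - 1)) j (b j - 1)

lemma lin_merge (b : Fin l → ℤ) {i j : Fin l} (hij : i ≠ j) :
    sg k i j (lin k b) = lin k (merge b i j) := by
  unfold lin merge
  have hji := hij.symm
  simp only [map_sum, map_mul, map_intCast, sg_X]
  rw [← Finset.add_sum_erase _ _ (Finset.mem_univ i), ← Finset.add_sum_erase _ _ (Finset.mem_univ i)]
  have hj : j ∈ Finset.univ.erase i := by simp [hji]
  rw [← Finset.add_sum_erase _ _ hj, ← Finset.add_sum_erase _ _ hj]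
  have : ∀ s ∈ (Finset.univ.erase i).erase j, ((b s : ℤ) : RR) * (if s = i then X j else X s) =
    ((Function.update (Function.update b i 0) j (b i + b j) s : ℤ) : RR) * X s := by
    intro s hs
    simp only [Finset.mem_erase, Finset.mem_univ, and_true] at hs
    simp [hs.1, hs.2]
  rw [Finset.sum_congr rfl this]
  simp [hij, hji]; ring

lemma lin_lower (b : Fin l → ℤ) {i j : Fin l} (hij : i ≠ j) :
    lin k b = lin k (lower b i j) + X i + X j := by
  unfold lin lower
  have hji := hij.symm
  rw [← Finset.add_sum_erase _ _ (Finset.mem_univ i), ← Finset.add_sum_erase (a := i) (s := Finset.univ) (f := fun s => ((Function.update (Function.update b i (b i - 1)) j (b j - 1) s : ℤ) : RR) * X s) (Finset.mem_univ i)]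
  have hj : j ∈ Finset.univ.erase i := by simp [hji]
  rw [← Finset.add_sum_erase _ _ hj, ← Finset.add_sum_erase (f := fun s => ((Function.update (Function.update b i (b i - 1)) j (b j - 1) s : ℤ) : RR) * X s) _ hj]
  have : ∀ s ∈ (Finset.univ.erase i).erase j, ((b s : ℤ) : RR) * X s =
    ((Function.update (Function.update b i (b i - 1)) j (b j - 1) s : ℤ) : RR) * X s := by
    intro s hs
    simp only [Finset.mem_erase, Finset.mem_univ, and_true] at hs
    simp [hs.1, hs.2]
  rw [Finset.sum_congr rfl this]
  simp [hij]; ring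

lemma Inv_sg {b : Fin l → ℤ} {i j : Fin l} (hij : i ≠ j) {Q : RR} (hQ : Q ∈ Inv k b) :
    sg k i j Q ∈ Inv k (merge b i j) :=
  ⟨by rw [fP_sg, hQ.1, map_zero], by rw [dP_sg, hQ.2, map_mul, lin_merge b hij]⟩

lemma Inv_div {b : Fin l → ℤ} {i j : Fin l} (hij : i ≠ j) {Q : RR}
    (hQ : (X i - X j) * Q ∈ Inv k b) : Q ∈ Inv k (lower b i j) := by
  have hne : (X i - X j : RR) ≠ 0 := X_sub_X_ne hij
  obtain ⟨h1, h2⟩ := hQ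
  rw [Derivation.leibniz] at h1 h2
  simp only [map_sub, fP_X, dP_X, sub_self, smul_eq_mul, mul_zero, add_zero] at h1 h2
  refine ⟨(mul_eq_zero.1 h1).resolve_left hne, ?_⟩
  rw [lin_lower b hij] at h2
  apply mul_left_cancel₀ hne
  linear_combination h2

lemma rank_step {b : Fin l → ℤ} {i j : Fin l} (hij : i ≠ j) {n m : ℕ}
    (hn : Module.rank k (Inv k (lower b i j)) ≤ n) (hm : Module.rank k (Inv k (merge b i j)) ≤ m) :
    Module.rank k (Inv k b) ≤ ((n + m : ℕ) : Cardinal) := by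
  let φ : Inv k b →ₗ[k] Inv k (merge b i j) :=
    ((sg k i j).toLinearMap.domRestrict (Inv k b)).codRestrict _ (fun x => Inv_sg hij x.2)
  have hφ : ∀ x, ((φ x : Inv k (merge b i j)) : RR) = sg k i j x := fun x => rfl
  rw [← LinearMap.rank_range_add_rank_ker φ]
  have h1 : Module.rank k (LinearMap.range φ) ≤ m := (Submodule.rank_le _).trans hm
  have h2 : Module.rank k (LinearMap.ker φ) ≤ n := by
    let μ : RR →ₗ[k] RR := LinearMap.mulLeft k (X i - X j)
    have hsub : ∀ x : LinearMap.ker φ, ((x : Inv k b) : RR) ∈ (Inv k (lower b i j)).map μ := by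
      intro x
      have hx : sg k i j ((x : Inv k b) : RR) = 0 := by
        rw [← hφ, LinearMap.mem_ker.1 x.2]; rfl
      obtain ⟨q, hq⟩ := dvd_of_sg i j hx
      refine ⟨q, Inv_div hij (b := b) ?_, hq.symm⟩
      rw [← hq]; exact x.1.2
    let ψ : LinearMap.ker φ →ₗ[k] (Inv k (lower b i j)).map μ :=
      ((Inv k b).subtype.comp (LinearMap.ker φ).subtype).codRestrict _ hsub
    have hψ : Function.Injective ψ := by
      intro x y hxy
      have := congrArg (fun z : (Inv k (lower b i j)).map μ => (z : RR)) hxy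
      exact Subtype.ext (Subtype.ext this)
    exact (LinearMap.rank_le_of_injective ψ hψ).trans ((rank_map_le _ _).trans hn)
  rw [add_comm n m]
  push_cast
  exact add_le_add h1 h2

lemma rank_base [CharZero k] {b : Fin l → ℤ} (i : Fin l) (h : ∀ s, s ≠ i → b s = 0) :
    Module.rank k (Inv k b) ≤ ((if b i = 0 then 1 else 0 : ℕ) : Cardinal) := by
  split_ifs with hi
  · have hle : Inv k b ≤ Submodule.span k {(1 : RR)} := by
      intro Q hQ
      by_cases h0 : Q = 0
      · rw [h0]; exact Submodule.zero_mem _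
      have hd : ∀ s, degreeOf s Q = 0 := by
        intro s
        have := degree_Inv hQ h0 s
        by_cases hs : s = i
        · subst hs; omega
        · rw [h s hs] at this; omega
      have : totalDegree Q = 0 := by
        rw [totalDegree_eq_zero_iff]
        intro m hm x
        have := monomial_le_degreeOf x hm
        rw [hd] at this; omega
      rw [totalDegree_eq_zero_iff_eq_C.1 this, Submodule.mem_span_singleton]
      exact ⟨_, by rw [smul_eq_C_mul, mul_one]⟩
    refine (Submodule.rank_mono hle).trans ((rank_span_le _).trans ?_)
    simp
  · have : Inv k b = ⊥ := by
      rw [eq_bot_iff]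
      intro Q hQ
      by_contra h0
      have h0 : Q ≠ 0 := h0
      have hd : ∀ s, s ≠ i → pderiv s Q = 0 := by
        intro s hs
        apply pderiv_eq_zero_of_notMem_vars
        rw [mem_vars_iff_degreeOf_ne_zero, not_not]
        have := degree_Inv hQ h0 s
        rw [h s hs] at this; omega
      have h1 := hQ.1
      have h2 := hQ.2
      rw [fP_eq, Finset.sum_eq_single i (fun s _ hs => hd s hs) (by simp)] at h1
      rw [dP_eq, Finset.sum_eq_single i (fun s _ hs => by rw [hd s hs, mul_zero]) (by simp), h1,
        mul_zero, lin, Finset.sum_eq_single i (fun s _ hs => by rw [h s hs]; simp) (by simp)] at h2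
      have h3 := (mul_eq_zero.1 h2.symm).resolve_right h0
      have h4 := (mul_eq_zero.1 h3).resolve_right (X_ne_zero i)
      exact hi (by exact_mod_cast h4)
    rw [this]
    simp

end PartE
section PartF

variable {l : ℕ}

def cnt : List ℕ → ℕ → ℕ
  | [], x => if x = 0 then 1 else 0
  | y :: ys, x => ((List.range (min x y + 1)).map fun r => cnt ys (x + y - 2 * r)).sum

lemma rank_inner [CharZero k] (i j : Fin l) (hij : i ≠ j) (F : ℕ → ℕ) (c : Fin l → ℤ)
    (hF : ∀ (z : ℕ) (b : Fin l → ℤ), b i = 0 → b j = z → (∀ s, s ≠ i → s ≠ j → b s = c s) →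
      Module.rank k (Inv k b) ≤ F z) (x : ℕ) :
    ∀ (y : ℕ) (b : Fin l → ℤ), b i = x → b j = y → (∀ s, s ≠ i → s ≠ j → b s = c s) →
      Module.rank k (Inv k b) ≤
        ((((List.range (min x y + 1)).map fun r => F (x + y - 2 * r)).sum : ℕ) : Cardinal) := by
  have hji := hij.symm
  have hm : ∀ b : Fin l → ℤ, ∀ s, s ≠ i → s ≠ j → merge b i j s = b s := by
    intro b s h1 h2; simp [merge, h1, h2]
  have hl : ∀ b : Fin l → ℤ, ∀ s, s ≠ i → s ≠ j → lower b i j s = b s := by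
    intro b s h1 h2; simp [lower, h1, h2]
  have hmi : ∀ b : Fin l → ℤ, merge b i j i = 0 := by intro b; simp [merge, hij]
  have hmj : ∀ b : Fin l → ℤ, merge b i j j = b i + b j := by intro b; simp [merge]
  have hli : ∀ b : Fin l → ℤ, lower b i j i = b i - 1 := by intro b; simp [lower, hij]
  have hlj : ∀ b : Fin l → ℤ, lower b i j j = b j - 1 := by intro b; simp [lower]
  induction x with
  | zero =>
    intro y b h1 h2 h3
    simpa using hF y b (by simpa using h1) h2 h3
  | succ x ih =>
    intro y b h1 h2 h3
    have hM : Module.rank k (Inv k (merge b i j)) ≤ F (x + 1 + y) :=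
      hF (x + 1 + y) _ (hmi b) (by rw [hmj, h1, h2]; push_cast; ring)
        (fun s hs hs' => by rw [hm b s hs hs', h3 s hs hs'])
    cases y with
    | zero =>
      have hL : Module.rank k (Inv k (lower b i j)) ≤ ((0 : ℕ) : Cardinal) := by
        rw [Inv_neg (i := j) (by rw [hlj, h2]; simp)]; simp
      simpa using rank_step hij hL hM
    | succ y =>
      have hL := ih y (lower b i j) (by rw [hli, h1]; push_cast; ring)
        (by rw [hlj, h2]; push_cast; ring) (fun s hs hs' => by rw [hl b s hs hs', h3 s hs hs'])
      refine (rank_step hij hL hM).trans (le_of_eq ?_)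
      congr 1
      have hmin : min (x + 1) (y + 1) + 1 = (min x y + 1) + 1 := by omega
      rw [hmin, List.range_succ_eq_map (n := min x y + 1), List.map_cons, List.sum_cons, List.map_map, add_comm]
      congr 1
      congr 1
      apply List.map_congr_left
      intro r _
      simp only [Function.comp]
      congr 1
      omega

lemma rank_cnt [CharZero k] (ys : List ℕ) : ∀ (x : ℕ) (i : Fin l) (b : Fin l → ℤ),
    (i : ℕ) + 1 + ys.length = l → (∀ s, s < i → b s = 0) → b i = x →
    (∀ s : Fin l, i < s → b s = (ys.getD (s - i - 1) 0 : ℕ)) →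
    Module.rank k (Inv k b) ≤ (cnt ys x : Cardinal) := by
  induction ys with
  | nil =>
    intro x i b hl h1 h2 h3
    refine (rank_base i (b := b) ?_).trans (le_of_eq ?_)
    · intro s hs
      apply h1
      simp at hl
      have := s.2
      rw [Fin.lt_def]
      have : (s : ℕ) ≠ i := fun h => hs (Fin.ext h)
      omega
    · rw [h2, cnt]; simp
  | cons y ys ih =>
    intro x i b hl h1 h2 h3
    simp only [List.length_cons] at hl
    let j : Fin l := ⟨i + 1, by omega⟩
    have hj : (j : ℕ) = i + 1 := rfl
    have hij : i ≠ j := fun h => by have := congrArg Fin.val h; omega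
    refine rank_inner i j hij (cnt ys) b ?_ x y b h2 ?_ (fun _ _ _ => rfl)
    · intro z b' hb1 hb2 hb3
      apply ih z j b' (by omega)
      · intro s hs
        by_cases hsi : s = i
        · rw [hsi, hb1]
        · rw [hb3 s hsi hs.ne]
          apply h1
          rw [Fin.lt_def] at *
          have : (s : ℕ) ≠ i := fun h => hsi (Fin.ext h)
          omega
      · exact hb2
      · intro s hs
        rw [Fin.lt_def] at hs
        have hsi : s ≠ i := fun h => by rw [h] at hs; omega
        have hsj : s ≠ j := fun h => by rw [h] at hs; omega
        rw [hb3 s hsi hsj, h3 s (by rw [Fin.lt_def]; omega)]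
        have : (s : ℕ) - i - 1 = (s - j - 1) + 1 := by omega
        rw [this]; simp
    · rw [h3 j (by rw [Fin.lt_def]; omega)]
      have : (j : ℕ) - i - 1 = 0 := by omega
      rw [this]; simp

lemma rank5 [CharZero k] : Module.rank k (Inv k (fun _ : Fin 5 => 4)) ≤ ((16 : ℕ) : Cardinal) := by
  have := rank_cnt (k := k) [4, 4, 4, 4] 4 (0 : Fin 5) (fun _ => 4) rfl (by simp) rfl (by decide)
  have h : cnt [4, 4, 4, 4] 4 = 16 := by decide +kernel
  rwa [h] at this

lemma rank4 [CharZero k] : Module.rank k (Inv k (fun _ : Fin 4 => 2)) ≤ ((3 : ℕ) : Cardinal) := by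
  have := rank_cnt (k := k) [2, 2, 2] 2 (0 : Fin 4) (fun _ => 2) rfl (by simp) rfl (by decide)
  have h : cnt [2, 2, 2] 2 = 3 := by decide +kernel
  rwa [h] at this

end PartF
section PartG

variable {l : ℕ}

/-- set the variables in `J` to zero -/
def pj (k : Type) [Field k] (J : Finset (Fin l)) : MvPolynomial (Fin l) k →ₐ[k] MvPolynomial (Fin l) k :=
  aeval (fun s => if s ∈ J then 0 else X s)

@[simp] lemma pj_X (J : Finset (Fin l)) (s : Fin l) : pj k J (X s) = if s ∈ J then 0 else X s := by
  simp [pj]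

lemma scaleAux_X (J : Finset (Fin l)) (i : Fin l) : scaleAux k l J (X i) =
    if i ∈ J then Polynomial.X * Polynomial.C (X i) else Polynomial.C (X i) := by
  simp [scaleAux]

lemma scaleAux_C (J : Finset (Fin l)) (c : k) : scaleAux k l J (C c) = Polynomial.C (C c) := by
  simp [scaleAux]

lemma scaleAux_coeff_zero (J : Finset (Fin l)) (p : MvPolynomial (Fin l) k) :
    (scaleAux k l J p).coeff 0 = pj k J p := by
  induction p using MvPolynomial.induction_on with
  | C a => rw [scaleAux_C]; simp [pj]
  | add p q hp hq => simp only [map_add, Polynomial.coeff_add, hp, hq]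
  | mul_X p i hp =>
    rw [map_mul, map_mul, Polynomial.mul_coeff_zero, hp, scaleAux_X, pj_X]
    split_ifs <;> simp

lemma pderiv_pj (J : Finset (Fin l)) (s : Fin l) (hs : s ∈ J) (p : MvPolynomial (Fin l) k) :
    pderiv s (pj k J p) = 0 := by
  induction p using MvPolynomial.induction_on with
  | C a => simp [pj]
  | add p q hp hq => simp only [map_add, hp, hq, add_zero]
  | mul_X p i hp =>
    rw [map_mul, Derivation.leibniz, hp, pj_X]
    split_ifs with h
    · simp
    · have : i ≠ s := fun h' => h (h' ▸ hs)
      simp [pderiv_X_of_ne this]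

lemma scaleAux_coeff_one (J : Finset (Fin l)) (s : Fin l) (hs : s ∈ J) (p : MvPolynomial (Fin l) k) :
    pderiv s ((scaleAux k l J p).coeff 1) = pj k J (pderiv s p) := by
  induction p using MvPolynomial.induction_on with
  | C a => rw [scaleAux_C]; simp
  | add p q hp hq => simp only [map_add, Polynomial.coeff_add, hp, hq]
  | mul_X p i hp =>
    rw [map_mul, scaleAux_X, Derivation.leibniz, map_add, smul_eq_mul, smul_eq_mul, map_mul, map_mul]
    split_ifs with h
    · rw [← mul_assoc, Polynomial.coeff_mul_C, Polynomial.coeff_mul_X, scaleAux_coeff_zero,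
        Derivation.leibniz, pderiv_pj J s hs]
      by_cases hi : i = s
      · subst hi; simp [h]
      · simp [h, pderiv_X_of_ne hi]
    · have hi : i ≠ s := fun h' => h (h' ▸ hs)
      rw [Polynomial.coeff_mul_C, Derivation.leibniz, hp]
      simp [h, pderiv_X_of_ne hi]

lemma lcoeff_scaleJ (J : Finset (Fin l)) (n : ℕ) (p : MvPolynomial (Fin l) k) :
    lcoeff (n : ℤ) (scaleJ J (am k l p)) = am k l ((scaleAux k l J p).coeff n) := by
  rw [scaleJ_am]
  simp only [toRatFuncHom, RingHom.comp_apply]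
  rw [lcoeff_poly]
  simp

lemma ordGE_scaleJ (J : Finset (Fin l)) (p : MvPolynomial (Fin l) k) :
    OrdGE 0 (scaleJ J (am k l p)) := by
  intro m hm
  rw [scaleJ_am]
  exact lcoeff_poly_neg m hm _

lemma pj_of_ordGE {J : Finset (Fin l)} {p : MvPolynomial (Fin l) k} {d : ℤ} (hd : 1 ≤ d)
    (h : OrdGE d (scaleJ J (am k l p))) : pj k J p = 0 := by
  have h0 := h ((0 : ℕ) : ℤ) (by push_cast; omega)
  rw [lcoeff_scaleJ, scaleAux_coeff_zero] at h0
  exact am_inj (h0.trans (map_zero _).symm)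

lemma ordGE_of_pj {J : Finset (Fin l)} {p : MvPolynomial (Fin l) k} (h : pj k J p = 0) :
    OrdGE 1 (scaleJ J (am k l p)) := by
  intro m hm
  rcases lt_or_eq_of_le (Int.lt_add_one_iff.1 (show m < 0 + 1 by simpa using hm)) with h1 | h1
  · exact ordGE_scaleJ J p m h1
  · have := lcoeff_scaleJ J 0 p
    rw [scaleAux_coeff_zero, h, map_zero] at this
    rw [h1]; exact_mod_cast this

lemma pj_pderiv_of_ordGE {J : Finset (Fin l)} {p : MvPolynomial (Fin l) k}
    (h : OrdGE 2 (scaleJ J (am k l p))) (s : Fin l) (hs : s ∈ J) : pj k J (pderiv s p) = 0 := by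
  have h0 := h ((1 : ℕ) : ℤ) (by norm_num)
  rw [lcoeff_scaleJ] at h0
  have h1 : (scaleAux k l J p).coeff 1 = 0 := am_inj (h0.trans (map_zero _).symm)
  rw [← scaleAux_coeff_one J s hs, h1, map_zero]

lemma scaleAux_univ_coeff (n : ℕ) (p : MvPolynomial (Fin l) k) :
    (scaleAux k l Finset.univ p).coeff n = homogeneousComponent n p := by
  induction p using MvPolynomial.induction_on' with
  | add p q hp hq => simp only [map_add, Polynomial.coeff_add, hp, hq]
  | monomial u a =>
    have : scaleAux k l Finset.univ (monomial u a) =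
        Polynomial.C (monomial u a) * Polynomial.X ^ u.degree := by
      have h1 : scaleAux k l Finset.univ (monomial u a) = Polynomial.C (C a) *
          u.prod fun i e => (Polynomial.X * Polynomial.C (X i)) ^ e := by
        simp [scaleAux, aeval_monomial, -Polynomial.X_mul_C]
      rw [h1, monomial_eq]
      simp only [mul_pow, map_mul, Finsupp.prod, map_prod, map_pow]
      rw [Finset.prod_mul_distrib, Finset.prod_pow_eq_pow_sum]
      have hd : u.degree = ∑ x ∈ u.support, u x := rfl
      rw [hd]; ring
    rw [this, Polynomial.coeff_C_mul_X_pow]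
    ext m
    rw [coeff_homogeneousComponent]
    split_ifs with h1 h2 h2
    · rfl
    · rw [coeff_monomial, if_neg]
      rintro rfl; exact h2 h1.symm
    · rw [coeff_zero, coeff_monomial, if_neg]
      rintro rfl; exact h1 h2.symm
    · simp

lemma homog_of_scale {p : MvPolynomial (Fin l) k} (h0 : p ≠ 0) {d : ℤ}
    (h : scaleJ Finset.univ (am k l p) = RatFunc.X ^ d * RatFunc.C (am k l p)) :
    ∃ n : ℕ, (n : ℤ) = d ∧ p.IsHomogeneous n := by
  have hn : ∀ n : ℕ, homogeneousComponent n p = if (n : ℤ) = d then p else 0 := by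
    intro n
    apply am_inj (k := k)
    rw [← scaleAux_univ_coeff, ← lcoeff_scaleJ, h, lcoeff_zpow_mul_C]
    split_ifs <;> simp
  obtain ⟨n, hne⟩ : ∃ n, homogeneousComponent n p ≠ 0 := by
    by_contra! hall
    apply h0
    rw [← sum_homogeneousComponent p]
    exact Finset.sum_eq_zero fun i _ => hall i
  have h1 := hn n
  by_cases hd : (n : ℤ) = d
  · rw [if_pos hd] at h1
    exact ⟨n, hd, h1 ▸ homogeneousComponent_isHomogeneous n p⟩
  · rw [if_neg hd] at h1; exact absurd h1 hne

def ei (i j : Fin l) : Fin l → Fin l → ℤ := fun a b => if a = i ∧ b = j then 1 else 0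

lemma mon_ei {i j : Fin l} (hij : i < j) : (mon (ei i j) : RF k l) = zv i - zv j := by
  unfold mon
  rw [Finset.prod_eq_single i, Finset.prod_eq_single j]
  · simp [hij, ei]
  · intro b _ hb; simp [ei, hb]
  · simp
  · intro a _ ha; apply Finset.prod_eq_one; intro b _; simp [ei, ha]
  · simp

lemma ordJ_pair (e : Fin l → Fin l → ℤ) {i j : Fin l} (hij : i < j) :
    ordJ e {i, j} = e i j := by
  unfold ordJ
  rw [Finset.sum_eq_single i, Finset.sum_eq_single j]
  · simp [hij]
  · intro b _ hb
    rw [if_neg]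
    simp only [Finset.mem_insert, Finset.mem_singleton]
    rintro ⟨h1, _, rfl | rfl⟩
    · exact lt_irrefl _ h1
    · exact hb rfl
  · simp
  · intro a _ ha; apply Finset.sum_eq_zero; intro b _
    rw [if_neg]
    simp only [Finset.mem_insert, Finset.mem_singleton]
    rintro ⟨h1, rfl | rfl, rfl | rfl⟩
    · exact ha rfl
    · exact ha rfl
    · exact lt_asymm hij h1
    · exact lt_irrefl _ h1
  · simp

lemma dvd_sg_sub_pj (i j : Fin l) (p : MvPolynomial (Fin l) k) :
    X j ∣ sg k i j p - pj k {i, j} p := by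
  induction p using MvPolynomial.induction_on with
  | C a => simp [sg, pj]
  | add p q hp hq => rw [map_add, map_add, add_sub_add_comm]; exact dvd_add hp hq
  | mul_X p s hp =>
    rw [map_mul, map_mul, sg_X, pj_X]
    by_cases h1 : s = i
    · simp [h1]
    · by_cases h2 : s = j
      · simp [h2]
      · simp only [h1, h2, Finset.mem_insert, Finset.mem_singleton, or_self, if_false]
        rw [← sub_mul]; exact hp.mul_right _

lemma dvd_of_pj [CharZero k] {i j : Fin l} {Q : MvPolynomial (Fin l) k} (hf : fP k l Q = 0)
    (h : pj k {i, j} Q = 0) : X i - X j ∣ Q := by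
  apply dvd_of_sg
  apply lemmaT (j := j)
  · rw [fP_sg, hf, map_zero]
  · have := dvd_sg_sub_pj i j Q
    rwa [h, sub_zero] at this

lemma pole_step [CharZero k] {D : Fin l → Derivation k (RF k l) (RF k l)} (hD : IsPartialDeriv D)
    {α : RF k l} (hf : fD D α = 0) {Q : MvPolynomial (Fin l) k} {e : Fin l → Fin l → ℤ}
    (hα : α = am k l Q * mon e) {i j : Fin l} (hij : i < j) {m : ℤ} (hm : e i j < m)
    (ho : OrdGE m (scaleJ {i, j} α)) : ∃ Q', α = am k l Q' * mon (e + ei i j) := by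
  have hQ : fP k l Q = 0 := (fD_amon hD e Q).1 (hα ▸ hf)
  rw [hα, map_mul] at ho
  have h1 := OrdGE.cancel (hasOrd_mon {i, j} e) ho
  rw [ordJ_pair e hij] at h1
  have h2 := pj_of_ordGE (by omega) h1
  obtain ⟨Q', hQ'⟩ := dvd_of_pj hQ h2
  refine ⟨Q', ?_⟩
  rw [hα, hQ', mon_add, mon_ei hij, map_mul, ← zv_sub_eq]
  ring

lemma pole_raise [CharZero k] {D : Fin l → Derivation k (RF k l) (RF k l)} (hD : IsPartialDeriv D)
    {α : RF k l} (hf : fD D α = 0) {i j : Fin l} (hij : i < j) {m : ℤ}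
    (ho : OrdGE m (scaleJ {i, j} α)) (n : ℕ) : ∀ (Q : MvPolynomial (Fin l) k) (e : Fin l → Fin l → ℤ)
    (_ : α = am k l Q * mon e) (_ : m ≤ e i j + n),
    ∃ Q' e', α = am k l Q' * mon e' ∧ e ≤ e' ∧ m ≤ e' i j := by
  induction n with
  | zero => intro Q e h1 h2; exact ⟨Q, e, h1, le_rfl, by simpa using h2⟩
  | succ n ih =>
    intro Q e h1 h2
    by_cases hm : m ≤ e i j
    · exact ⟨Q, e, h1, le_rfl, hm⟩
    · obtain ⟨Q', h⟩ := pole_step hD hf h1 hij (not_le.1 hm) ho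
      obtain ⟨Q'', e'', h3, h4, h5⟩ := ih Q' (e + ei i j) h (by
        simp [ei]; push_cast at h2; omega)
      refine ⟨Q'', e'', h3, le_trans ?_ h4, h5⟩
      intro a b
      simp only [Pi.add_apply, ei]
      split_ifs <;> omega

lemma pole_all [CharZero k] {D : Fin l → Derivation k (RF k l) (RF k l)} (hD : IsPartialDeriv D)
    {α : RF k l} (hf : fD D α = 0) (hΦ : α ∈ Phi k l) (m : Fin l → Fin l → ℤ)
    (ho : ∀ i j, i < j → OrdGE (m i j) (scaleJ {i, j} α)) (S : Finset (Fin l × Fin l)) :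
    ∃ Q e, α = am k l Q * mon e ∧ ∀ p ∈ S, p.1 < p.2 → m p.1 p.2 ≤ e p.1 p.2 := by
  induction S using Finset.induction_on with
  | empty =>
    obtain ⟨p, e, h⟩ := hΦ
    exact ⟨p, e, h, by simp⟩
  | insert a S ha ih =>
    obtain ⟨Q, e, h1, h2⟩ := ih
    by_cases hlt : a.1 < a.2
    · obtain ⟨Q', e', h3, h4, h5⟩ := pole_raise hD hf hlt (ho _ _ hlt)
        (m a.1 a.2 - e a.1 a.2).toNat Q e h1 (by omega)
      refine ⟨Q', e', h3, fun p hp hlt' => ?_⟩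
      rcases Finset.mem_insert.1 hp with rfl | hp
      · exact h5
      · exact (h2 p hp hlt').trans (h4 _ _)
    · refine ⟨Q, e, h1, fun p hp hlt' => ?_⟩
      rcases Finset.mem_insert.1 hp with rfl | hp
      · exact absurd hlt' hlt
      · exact h2 p hp hlt'

lemma mon_congr {e e' : Fin l → Fin l → ℤ} (h : ∀ i j, i < j → e i j = e' i j) :
    (mon e : RF k l) = mon e' := by
  unfold mon
  refine Finset.prod_congr rfl fun i _ => Finset.prod_congr rfl fun j _ => ?_
  split_ifs with hij
  · rw [h i j hij]
  · rfl

lemma pole [CharZero k] {D : Fin l → Derivation k (RF k l) (RF k l)} (hD : IsPartialDeriv D)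
    {α : RF k l} (hf : fD D α = 0) (hΦ : α ∈ Phi k l) (m : Fin l → Fin l → ℤ)
    (ho : ∀ i j, i < j → OrdGE (m i j) (scaleJ {i, j} α)) :
    ∃ Q, α = am k l Q * mon m := by
  obtain ⟨Q, e, h1, h2⟩ := pole_all hD hf hΦ m ho Finset.univ
  refine ⟨Q * pm k (fun i j => (e i j - m i j).toNat), ?_⟩
  rw [h1, map_mul, am_pm, mul_assoc, ← mon_add]
  congr 1
  apply mon_congr
  intro i j hij
  have := h2 (i, j) (Finset.mem_univ _) hij
  simp only [Pi.add_apply] at *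
  omega

/-- translation invariance of admissible functions -/
lemma fD_admissible [CharZero k] {D : Fin l → Derivation k (RF k l) (RF k l)} (hD : IsPartialDeriv D)
    {α : RF k l} (hα : Admissible D Finset.univ α) : fD D α = 0 := by
  obtain ⟨⟨p, e, h1⟩, -, h2, h3, -⟩ := hα
  change α = am k l p * mon e at h1
  by_cases h0 : p = 0
  · rw [h1, h0]; simp
  rw [h1] at h2 h3 ⊢
  rw [dD_amon hD] at h2
  rw [fD_amon hD]
  unfold IsHomogeneousOn at h3
  rw [map_mul, map_mul, scaleJ_mon_noCross _ _ (fun i j _ hij => absurd (by simp) hij)] at h3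
  have hX : (RatFunc.X : RatFunc (RF k l)) ≠ 0 := RatFunc.X_ne_zero
  have hm : (RatFunc.C (mon e : RF k l)) ≠ 0 := (map_ne_zero _).2 (mon_ne e)
  have h4 : scaleJ Finset.univ (am k l p) =
      RatFunc.X ^ (-(2 * (l : ℤ)) - ordJ e Finset.univ) * RatFunc.C (am k l p) := by
    rw [zpow_sub₀ hX]
    have hXo := zpow_ne_zero (ordJ e Finset.univ) hX
    apply mul_right_cancel₀ (mul_ne_zero hXo hm)
    rw [h3]
    simp only [Finset.card_univ, Fintype.card_fin]
    field_simp
  obtain ⟨n, hn, hp⟩ := homog_of_scale h0 h4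
  refine fP_of_homog hp h2 ?_
  have hdeg : ∑ i, degK e i = 2 * ordJ e Finset.univ := by
    have h5 : ordJ e Finset.univ = ∑ i : Fin l, ∑ j : Fin l, if i < j then e i j else 0 := by
      simp [ordJ]
    have h6 : ordJ e Finset.univ = ∑ i : Fin l, ∑ j : Fin l, if j < i then e j i else 0 := by
      rw [h5, Finset.sum_comm]
    rw [two_mul]
    conv_rhs => rw [h5]
    nth_rewrite 2 [← h5]
    rw [h6, ← Finset.sum_add_distrib]
    refine Finset.sum_congr rfl fun i _ => ?_
    rw [degK, ← Finset.sum_add_distrib]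
    refine Finset.sum_congr rfl fun j _ => ?_
    rcases lt_trichotomy i j with h | h | h
    · simp [h, h.not_gt]
    · simp [h]
    · simp [h, h.not_gt]
  rw [hn, Finset.sum_sub_distrib, hdeg]
  simp; ring

end PartG
section PartH

variable {l : ℕ}

lemma prop_of_pderiv [CharZero k] {q g : MvPolynomial (Fin l) k} (hg : g ≠ 0)
    (h : ∀ s, pderiv s q * g = q * pderiv s g) : ∃ c : k, q = C c * g := by
  let m : MonomialOrder (Fin l) := MonomialOrder.lex
  have hgc : coeff (m.degree g) g ≠ 0 := MonomialOrder.coeff_degree_ne_zero_iff.2 hg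
  refine ⟨coeff (m.degree g) q / coeff (m.degree g) g, ?_⟩
  set c := coeff (m.degree g) q / coeff (m.degree g) g with hc
  rw [← sub_eq_zero]
  by_contra h0
  set r := q - C c * g with hr
  have hrc : coeff (m.degree r) r ≠ 0 := MonomialOrder.coeff_degree_ne_zero_iff.2 h0
  have hrg : coeff (m.degree g) r = 0 := by
    rw [hr, coeff_sub, coeff_C_mul, hc]; field_simp; simp
  have hrel : ∀ s, (X s * pderiv s r) * g = r * (X s * pderiv s g) := by
    intro s
    rw [hr, map_sub, Derivation.leibniz, pderiv_C]
    simp only [smul_eq_mul, mul_zero, add_zero]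
    linear_combination X s * h s
  have hdeg : ∀ (p : MvPolynomial (Fin l) k) s, m.toSyn (m.degree (X s * pderiv s p)) ≤ m.toSyn (m.degree p) := by
    intro p s
    rw [MonomialOrder.degree_le_iff]
    intro n hn
    apply MonomialOrder.le_degree
    rw [mem_support_iff, coeff_Xp] at hn
    exact mem_support_iff.2 (right_ne_zero_of_mul hn)
  have : m.degree r = m.degree g := by
    ext s
    have h1 := congrArg (coeff (m.degree r + m.degree g)) (hrel s)
    rw [MonomialOrder.coeff_mul_of_add_of_degree_le (hdeg r s) le_rfl,
      MonomialOrder.coeff_mul_of_add_of_degree_le le_rfl (hdeg g s), coeff_Xp, coeff_Xp] at h1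
    have h2 : ((m.degree r s : ℕ) : k) = m.degree g s := by
      apply mul_right_cancel₀ (mul_ne_zero hrc hgc)
      linear_combination h1
    exact_mod_cast h2
  exact hrc (this ▸ hrg)

lemma pj_pderiv (J : Finset (Fin l)) (s : Fin l) (hs : s ∉ J) (p : MvPolynomial (Fin l) k) :
    pj k J (pderiv s p) = pderiv s (pj k J p) := by
  induction p using MvPolynomial.induction_on with
  | C a => simp [pj]
  | add p q hp hq => simp only [map_add, hp, hq]
  | mul_X p i hp =>
    rw [Derivation.leibniz, map_mul (pj k J) p (X i), Derivation.leibniz, map_add]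
    simp only [smul_eq_mul, map_mul, hp, pj_X]
    by_cases hi : i = s
    · subst hi; simp [hs]
    · split_ifs <;> simp [pderiv_X_of_ne hi]

lemma pj_pj (J : Finset (Fin l)) (p : MvPolynomial (Fin l) k) : pj k J (pj k J p) = pj k J p := by
  induction p using MvPolynomial.induction_on with
  | C a => simp [pj]
  | add p q hp hq => simp only [map_add, hp, hq]
  | mul_X p i hp =>
    rw [map_mul, map_mul, hp, pj_X]
    split_ifs with h <;> simp [h]

lemma scaleJ_pj (J : Finset (Fin l)) (p : MvPolynomial (Fin l) k) :
    scaleJ J (am k l (pj k J p)) = RatFunc.C (am k l (pj k J p)) := by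
  induction p using MvPolynomial.induction_on with
  | C a =>
    have h : pj k J (C a) = C a := by simp [pj]
    have : am k l (C a) = algebraMap k (RF k l) a := by
      rw [IsScalarTower.algebraMap_apply k (MvPolynomial (Fin l) k) (RF k l)]; rfl
    rw [h, this, scaleJ_const]
  | add p q hp hq => simp only [map_add, hp, hq]
  | mul_X p i hp =>
    rw [map_mul, map_mul, map_mul, map_mul, hp, pj_X]
    split_ifs with h
    · simp
    · have := scaleJ_zv (k := k) J i
      rw [if_neg h, one_mul] at this
      have h2 : am k l (X i) = zv i := rfl
      rw [h2, this]

lemma dP_pj (J : Finset (Fin l)) (p : MvPolynomial (Fin l) k) :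
    dP k l (pj k J p) = pj k J (dP k l p) :=
  der_hom _ _ (fun s => by rw [pj_X, dP_X, map_pow, pj_X]; split_ifs <;> simp) p
lemma eP_pj (J : Finset (Fin l)) (p : MvPolynomial (Fin l) k) :
    eP k l (pj k J p) = pj k J (eP k l p) :=
  der_hom _ _ (fun s => by rw [pj_X, eP_X, pj_X]; split_ifs <;> simp) p

lemma eP_Inv {b : Fin l → ℤ} {Q : MvPolynomial (Fin l) k} (hQ : Q ∈ Inv k b) :
    2 * eP k l Q = ((∑ i, b i : ℤ) : MvPolynomial (Fin l) k) * Q := by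
  have h := comm_fd Q
  rw [hQ.1, hQ.2, Derivation.leibniz, hQ.1, fP_lin, map_zero] at h
  simp only [smul_eq_mul, mul_zero, zero_add] at h
  rw [← h]; ring

lemma fP_pj_of_Inv (J : Finset (Fin l)) {Q : MvPolynomial (Fin l) k} (hQ : fP k l Q = 0) :
    fP k l (pj k J Q) = - ∑ s ∈ J, pj k J (pderiv s Q) := by
  have h1 := congrArg (pj k J) hQ
  rw [fP_eq, map_sum, map_zero, ← Finset.sum_add_sum_compl J] at h1
  rw [fP_eq, ← Finset.sum_add_sum_compl J, Finset.sum_eq_zero (s := J) (fun s hs => pderiv_pj J s hs Q),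
    zero_add]
  rw [Finset.sum_congr rfl (fun s hs => (pj_pderiv J s (Finset.mem_compl.1 hs) Q).symm)]
  linear_combination h1

/-- Rigidity of the leading part. -/
lemma rigid [CharZero k] {J : Finset (Fin l)} {b : Fin l → ℤ} {Q P : MvPolynomial (Fin l) k}
    (hJ : ∀ s, s ∉ J → ∃ t u, s ≠ t ∧ s ≠ u ∧ ∀ r, r ≠ s → r ∈ J ∨ r = t ∨ r = u)
    (hQ : Q ∈ Inv k b) (hP : P ∈ Inv k b) (hg : pj k J P ≠ 0)
    (ho : OrdGE 2 (scaleJ J (am k l (Q * pj k J P - pj k J Q * P)))) :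
    ∃ c : k, pj k J Q = C c * pj k J P := by
  set q := pj k J Q with hq
  set g := pj k J P with hgd
  have hJ0 : ∀ s ∈ J, pj k J (pderiv s Q) * g = q * pj k J (pderiv s P) := by
    intro s hs
    have h := pj_pderiv_of_ordGE ho s hs
    rw [map_sub, Derivation.leibniz, Derivation.leibniz, hq, hgd, pderiv_pj J s hs,
      pderiv_pj J s hs] at h
    simp only [smul_eq_mul, mul_zero, zero_add, add_zero, map_sub, map_mul, pj_pj] at h
    rw [hq, hgd]
    linear_combination h
  have hf : fP k l q * g = q * fP k l g := by
    rw [hq, hgd, fP_pj_of_Inv J hQ.1, fP_pj_of_Inv J hP.1, neg_mul, mul_neg, Finset.sum_mul,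
      Finset.mul_sum, Finset.sum_congr rfl hJ0]
  have hd : dP k l q * g = q * dP k l g := by
    rw [hq, hgd, dP_pj, dP_pj, hQ.2, hP.2, map_mul, map_mul]; ring
  have he : eP k l q * g = q * eP k l g := by
    have h2 : (2 : MvPolynomial (Fin l) k) ≠ 0 := two_ne_zero
    apply mul_left_cancel₀ h2
    have h3 : ∀ {R : MvPolynomial (Fin l) k}, R ∈ Inv k b →
        2 * pj k J (eP k l R) = ((∑ i, b i : ℤ) : MvPolynomial (Fin l) k) * pj k J R := by
      intro R hR
      have := congrArg (pj k J) (eP_Inv hR)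
      simpa only [map_mul, map_intCast, map_ofNat] using this
    rw [hq, hgd, eP_pj, eP_pj]
    linear_combination (pj k J P) * h3 hQ - (pj k J Q) * h3 hP
  apply prop_of_pderiv hg
  intro s
  by_cases hs : s ∈ J
  · rw [hq, hgd, pderiv_pj J s hs, pderiv_pj J s hs]; simp
  obtain ⟨t, u, hst, hsu, hall⟩ := hJ s hs
  rw [fP_eq, fP_eq, Finset.sum_mul, Finset.mul_sum, ← sub_eq_zero, ← Finset.sum_sub_distrib] at hf
  rw [dP_eq, dP_eq, Finset.sum_mul, Finset.mul_sum, ← sub_eq_zero, ← Finset.sum_sub_distrib] at hd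
  rw [eP_eq, eP_eq, Finset.sum_mul, Finset.mul_sum, ← sub_eq_zero, ← Finset.sum_sub_distrib] at he
  have hsum : ∑ r, ((X r - X t) * (X r - X u)) * (pderiv r q * g - q * pderiv r g) = 0 := by
    have : ∀ r, ((X r - X t) * (X r - X u)) * (pderiv r q * g - q * pderiv r g) =
      (X r ^ 2 * pderiv r q * g - q * (X r ^ 2 * pderiv r g))
      - (X t + X u) * (X r * pderiv r q * g - q * (X r * pderiv r g))
      + X t * X u * (pderiv r q * g - q * pderiv r g) := fun r => by ring
    simp only [this, Finset.sum_add_distrib, Finset.sum_sub_distrib, ← Finset.mul_sum]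
    simp only [Finset.sum_sub_distrib, ← Finset.mul_sum] at hf hd he
    linear_combination hd - (X t + X u) * he + X t * X u * hf
  rw [Finset.sum_eq_single s] at hsum
  · have h1 : (X s - X t) * (X s - X u) ≠ (0 : MvPolynomial (Fin l) k) :=
      mul_ne_zero (X_sub_X_ne hst) (X_sub_X_ne hsu)
    exact sub_eq_zero.1 ((mul_eq_zero.1 hsum).resolve_left h1)
  · intro r _ hr
    rcases hall r hr with h | h | h
    · rw [hq, hgd, pderiv_pj J r h, pderiv_pj J r h]; simp
    · subst h; simp
    · subst h; simp
  · simp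

abbrev e4 (l : ℕ) : Fin l → Fin l → ℤ := fun _ _ => -4

def dpoly (k : Type) [Field k] (E : Fin l → Fin l → ℤ) : MvPolynomial (Fin l) k :=
  pm k (fun i j => (E i j + 4).toNat)

lemma dpoly_eq {E : Fin l → Fin l → ℤ} (hE : ∀ i j, i < j → -4 ≤ E i j) :
    (mon E : RF k l) = am k l (dpoly k E) * mon (e4 l) := by
  rw [dpoly, am_pm, ← mon_add]
  apply mon_congr
  intro i j hij
  have := hE i j hij
  simp only [Pi.add_apply, e4]
  omega

lemma Inv_of_adm [CharZero k] {D : Fin l → Derivation k (RF k l) (RF k l)} (hD : IsPartialDeriv D)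
    {α : RF k l} (hα : Admissible D Finset.univ α) {Q : MvPolynomial (Fin l) k}
    {e : Fin l → Fin l → ℤ} (h : α = am k l Q * mon e) :
    Q ∈ Inv k (fun i => -4 - degK e i) := by
  refine ⟨(fD_amon hD e Q).1 (h ▸ fD_admissible hD hα), (dD_amon hD e Q).1 ?_⟩
  rw [← h]; exact hα.2.2.1

lemma adm_ordGE {D : Fin l → Derivation k (RF k l) (RF k l)} {α : RF k l}
    (hα : Admissible D Finset.univ α) (J : Finset (Fin l)) :
    OrdGE (-(2 * J.card)) (scaleJ J α) := by
  intro m hm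
  have := hα.2.2.2.2 J (Finset.subset_univ _) (m + 2 * J.card) (Or.inl (by linarith))
  rw [component, sum_two] at this
  simpa using this

lemma adm_lcoeff {D : Fin l → Derivation k (RF k l) (RF k l)} {α : RF k l}
    (hα : Admissible D Finset.univ α) (J : Finset (Fin l)) :
    lcoeff (-(2 * J.card) + 1) (scaleJ J α) = 0 := by
  have := hα.2.2.2.2 J (Finset.subset_univ _) 1 (Or.inr rfl)
  rw [component, sum_two] at this
  rw [← this]; congr 1; ring

lemma OrdGE.succ {L : Type} [Field L] {d : ℤ} {f : RatFunc L} (h : OrdGE d f) (h0 : lcoeff d f = 0) :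
    OrdGE (d + 1) f := by
  intro m hm
  rcases lt_or_eq_of_le (Int.lt_add_one_iff.1 hm) with h1 | h1
  · exact h m h1
  · rw [h1, h0]

lemma pj_ne_of_hasOrd {J : Finset (Fin l)} {P : MvPolynomial (Fin l) k}
    (h : HasOrd 0 (scaleJ J (am k l P))) : pj k J P ≠ 0 := by
  intro h0
  have h1 := ordGE_of_pj h0
  rw [← one_mul (scaleJ J (am k l P))] at h1
  have h2 := OrdGE.cancel h h1 0 (by norm_num)
  have h3 := lcoeff_zpow_mul_C 0 0 (1 : RF k l)
  simp only [zpow_zero, map_one, mul_one, if_true] at h3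
  rw [h3] at h2
  exact one_ne_zero h2

/-- decomposition data at a pair -/
lemma pair_coeff [CharZero k] {D : Fin l → Derivation k (RF k l) (RF k l)} (hD : IsPartialDeriv D)
    {α : RF k l} (hα : Admissible D Finset.univ α) {Q : MvPolynomial (Fin l) k}
    (hQ : α = am k l Q * mon (e4 l)) {E : Fin l → Fin l → ℤ} (hE : GoodK E)
    (hE4 : ∀ i j, i < j → -4 ≤ E i j) {i j : Fin l} (hij : i < j) (hEij : E i j = -4)
    (hN : NoCross E {i, j})
    (hJ : ∀ s, s ∉ ({i, j} : Finset (Fin l)) →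
      ∃ t u, s ≠ t ∧ s ≠ u ∧ ∀ r, r ≠ s → r ∈ ({i, j} : Finset (Fin l)) ∨ r = t ∨ r = u) :
    ∃ c : k, pj k {i, j} (Q - C c * dpoly k E) = 0 := by
  have hEa : Admissible D Finset.univ (mon E : RF k l) := admissible_mon hD hE
  have hQI := Inv_of_adm hD hα hQ
  have hPI := Inv_of_adm hD hEa (dpoly_eq hE4)
  have hcard : ((({i, j} : Finset (Fin l)).card : ℕ) : ℤ) = 2 := by
    rw [Finset.card_pair hij.ne]; rfl
  set J : Finset (Fin l) := {i, j} with hJd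
  set P := dpoly k E with hPd
  have hM := hasOrd_mon (k := k) J (e4 l)
  have hM4 : ordJ (e4 l) J = -4 := ordJ_pair _ hij
  have hE4' : ordJ E J = -4 := (ordJ_pair _ hij).trans hEij
  rw [hM4] at hM
  have hsE := scaleJ_mon_noCross (k := k) J E hN
  have hPord : HasOrd 0 (scaleJ J (am k l P)) := by
    have h1 := (hasOrd_mon (k := k) J E).mul hM.inv
    rw [hE4', dpoly_eq hE4, map_mul, mul_assoc, mul_inv_cancel₀ hM.1, mul_one] at h1
    simpa using h1
  have hg := pj_ne_of_hasOrd hPord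
  suffices h : ∃ c : k, pj k J Q = C c * pj k J P by
    obtain ⟨c, hc⟩ := h
    refine ⟨c, ?_⟩
    rw [map_sub, map_mul, hc]
    simp [pj]
  refine rigid hJ hQI hPI hg ?_
  have ho := adm_ordGE hα J
  have hl1 := adm_lcoeff hα J
  rw [hcard] at ho hl1
  set A := lcoeff (-4) (scaleJ J α) with hA
  have hr : OrdGE (-2) (scaleJ J α - RatFunc.X ^ (-4 : ℤ) * RatFunc.C A) := by
    have h1 : OrdGE (-4) (scaleJ J α - RatFunc.X ^ (-4 : ℤ) * RatFunc.C A) := by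
      intro m hm
      rw [lcoeff_sub, lcoeff_zpow_mul_C, if_neg hm.ne, ho m (by linarith), sub_zero]
    have h2 : OrdGE (-3) (scaleJ J α - RatFunc.X ^ (-4 : ℤ) * RatFunc.C A) := by
      apply h1.succ
      rw [lcoeff_sub, lcoeff_zpow_mul_C, if_pos rfl, hA, sub_self]
    apply h2.succ
    have h3 : lcoeff (-3) (scaleJ J α) = 0 := by rw [← hl1]; norm_num
    rw [lcoeff_sub, lcoeff_zpow_mul_C, h3]; simp
  rw [hE4'] at hsE
  have h5 : OrdGE 2 (RatFunc.C (mon E : RF k l) * scaleJ J (am k l Q) -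
      RatFunc.C A * scaleJ J (am k l P)) := by
    have h6 := hr.C_mul (mon E : RF k l)
    have h7 : RatFunc.C (mon E : RF k l) * (scaleJ J α - RatFunc.X ^ (-4 : ℤ) * RatFunc.C A) =
      (RatFunc.C (mon E : RF k l) * scaleJ J (am k l Q) -
      RatFunc.C A * scaleJ J (am k l P)) * scaleJ J (mon (e4 l)) := by
      have h8 : scaleJ J (am k l P) * scaleJ J (mon (e4 l)) =
        RatFunc.X ^ (-4 : ℤ) * RatFunc.C (mon E : RF k l) := by
        rw [← hsE, ← map_mul, ← dpoly_eq hE4]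
      rw [hQ, map_mul]
      linear_combination RatFunc.C A * h8
    rw [h7] at h6
    have := OrdGE.cancel hM h6
    exact this.mono (by norm_num)
  have h9 : mon E * am k l (pj k J Q) = A * am k l (pj k J P) := by
    have := h5 ((0 : ℕ) : ℤ) (by norm_num)
    rw [lcoeff_sub, lcoeff_C_mul, lcoeff_C_mul, lcoeff_scaleJ, lcoeff_scaleJ, scaleAux_coeff_zero,
      scaleAux_coeff_zero] at this
    exact sub_eq_zero.1 this
  have h10 : RatFunc.C (am k l (pj k J P)) * (RatFunc.C (mon E : RF k l) * scaleJ J (am k l Q) -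
      RatFunc.C A * scaleJ J (am k l P)) =
      RatFunc.C (mon E : RF k l) * scaleJ J (am k l (Q * pj k J P - pj k J Q * P)) := by
    have h11 := congrArg (RatFunc.C (K := RF k l)) h9
    rw [map_mul, map_mul] at h11
    rw [map_sub, map_mul, map_mul, map_sub, map_mul, map_mul, scaleJ_pj, scaleJ_pj]
    linear_combination scaleJ J (am k l P) * h11
  have h12 := h5.C_mul (am k l (pj k J P))
  rw [h10] at h12
  have h13 := h12.C_mul (mon E : RF k l)⁻¹
  rw [← mul_assoc, ← map_mul, inv_mul_cancel₀ (mon_ne E), map_one, one_mul] at h13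
  exact h13

lemma smul_mon_eq {α : RF k l} {Q : MvPolynomial (Fin l) k}
    (hQ : α = am k l Q * mon (e4 l)) {E : Fin l → Fin l → ℤ}
    (hE4 : ∀ i j, i < j → -4 ≤ E i j) (c : k) :
    α - c • mon E = am k l (Q - C c * dpoly k E) * mon (e4 l) := by
  have : am k l (C c) = algebraMap k (RF k l) c := by
    rw [IsScalarTower.algebraMap_apply k (MvPolynomial (Fin l) k) (RF k l)]; rfl
  rw [hQ, dpoly_eq hE4, map_sub, map_mul, Algebra.smul_def, this]; ring

lemma pair_ord {D : Fin l → Derivation k (RF k l) (RF k l)} (hD : IsPartialDeriv D)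
    {α : RF k l} (hα : Admissible D Finset.univ α) {Q : MvPolynomial (Fin l) k}
    (hQ : α = am k l Q * mon (e4 l)) {E : Fin l → Fin l → ℤ} (hE : GoodK E)
    (hE4 : ∀ i j, i < j → -4 ≤ E i j) {i j : Fin l} (hij : i < j) {c : k}
    (hc : pj k {i, j} (Q - C c * dpoly k E) = 0) :
    OrdGE (-2) (scaleJ {i, j} (α - c • mon E)) := by
  have hcard : ((({i, j} : Finset (Fin l)).card : ℕ) : ℤ) = 2 := by
    rw [Finset.card_pair hij.ne]; rfl
  have h1 : OrdGE (-3) (scaleJ {i, j} (α - c • mon E)) := by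
    rw [smul_mon_eq hQ hE4, map_mul]
    have := (ordGE_of_pj hc).mul (hasOrd_mon (k := k) {i, j} (e4 l)).ordGE
    rw [ordJ_pair _ hij] at this
    exact this.mono (by norm_num)
  apply h1.succ
  have a1 := adm_lcoeff hα {i, j}
  have a2 := adm_lcoeff (admissible_mon (k := k) hD hE) {i, j}
  rw [hcard] at a1 a2
  norm_num at a1 a2
  rw [map_sub, lcoeff_sub, scaleJ_smul, lcoeff_C_mul, a1, a2]; simp

end PartH
section PartI

variable {l : ℕ}

abbrev e2 (l : ℕ) : Fin l → Fin l → ℤ := fun _ _ => -2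

lemma am_C (c : k) : am k l (C c) = algebraMap k (RF k l) c := by
  rw [IsScalarTower.algebraMap_apply k (MvPolynomial (Fin l) k) (RF k l)]; rfl

/-- The data of a family of exponents. -/
structure Fam (ι κ : Type) (l : ℕ) where
  dec : ι → Fin l → Fin l → ℤ
  mo : κ → Fin l → Fin l → ℤ
  jj : ι → Finset (Fin l)
  goodD : ∀ x, GoodK (dec x)
  dec4 : ∀ x i j, i < j → -4 ≤ dec x i j
  dec2 : ∀ i j, i < j → ∃ x, dec x i j = -4 ∧ ∀ y, y ≠ x → -2 ≤ dec y i j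
  goodM : ∀ g, GoodK (mo g)
  goodMI : ∀ g, GoodI (mo g)
  mo2 : ∀ g i j, i < j → -2 ≤ mo g i j
  j0 : ∀ x, jj x ≠ ∅
  j1 : ∀ x, jj x ≠ Finset.univ
  nc : ∀ x, NoCross (dec x) (jj x) ∧ ordJ (dec x) (jj x) = -2 * (jj x).card
  gd : ∀ x y, x ≠ y → -2 * (jj x).card + 2 ≤ ordJ (dec y) (jj x)

variable {ι κ : Type} [Fintype ι] [Fintype κ] (F : Fam ι κ l)

def mpoly (k : Type) [Field k] (e : Fin l → Fin l → ℤ) : MvPolynomial (Fin l) k :=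
  pm k (fun i j => (e i j + 2).toNat)

lemma mpoly_eq {E : Fin l → Fin l → ℤ} (hE : ∀ i j, i < j → -2 ≤ E i j) :
    (mon E : RF k l) = am k l (mpoly k E) * mon (e2 l) := by
  rw [mpoly, am_pm, ← mon_add]
  apply mon_congr
  intro i j hij
  have := hE i j hij
  simp only [Pi.add_apply, e2]
  omega

/-- `Q ↦ Q * mon e` as a linear map -/
def tw (k : Type) [Field k] (e : Fin l → Fin l → ℤ) : MvPolynomial (Fin l) k →ₗ[k] RF k l where
  toFun Q := am k l Q * mon e
  map_add' a b := by rw [map_add, add_mul]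
  map_smul' c a := by
    rw [MvPolynomial.smul_eq_C_mul, map_mul, am_C, Algebra.smul_def, mul_assoc]; rfl

lemma tw_inj (e : Fin l → Fin l → ℤ) : Function.Injective (tw k e) := by
  intro a b h
  exact am_inj (mul_right_cancel₀ (mon_ne e) h)

/-- the conditions on a rational function which are used for the upper bound -/
lemma mem_span_mo [CharZero k] {D : Fin l → Derivation k (RF k l) (RF k l)} (hD : IsPartialDeriv D)
    (hli : LinearIndependent k (fun g => mpoly k (F.mo g)))
    (hr : Module.rank k (Inv k (fun i : Fin l => -4 - degK (e2 l) i)) ≤ ((Fintype.card κ : ℕ) : Cardinal))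
    {Q : MvPolynomial (Fin l) k} (hQ : Q ∈ Inv k (fun i : Fin l => -4 - degK (e2 l) i)) :
    am k l Q * mon (e2 l) ∈ Submodule.span k (Set.range (fun g => (mon (F.mo g) : RF k l))) := by
  set V := Inv k (fun i : Fin l => -4 - degK (e2 l) i)
  have hin : ∀ g, mpoly k (F.mo g) ∈ V := fun g =>
    Inv_of_adm hD (admissible_mon hD (F.goodM g)) (mpoly_eq (F.mo2 g))
  have hle : Submodule.span k (Set.range (fun g => mpoly k (F.mo g))) ≤ V := by
    rw [Submodule.span_le]; rintro _ ⟨g, rfl⟩; exact hin g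
  have : Module.Finite k V := by
    rw [← Module.rank_lt_aleph0_iff]
    exact lt_of_le_of_lt hr (Cardinal.natCast_lt_aleph0)
  have hfr : Module.finrank k V ≤ Fintype.card κ := Module.finrank_le_of_rank_le hr
  have heq := Submodule.eq_of_le_of_finrank_le hle (by rw [finrank_span_eq_card hli]; exact hfr)
  rw [← heq] at hQ
  have h2 := Submodule.mem_map_of_mem (f := tw k (e2 l)) hQ
  rw [Submodule.map_span, ← Set.range_comp] at h2
  have h3 : (tw k (e2 l)) ∘ (fun g => mpoly k (F.mo g)) = fun g => (mon (F.mo g) : RF k l) := by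
    funext g; exact (mpoly_eq (F.mo2 g)).symm
  rwa [h3] at h2

lemma li_mo (hli : LinearIndependent k (fun g => mpoly k (F.mo g))) :
    LinearIndependent k (fun g => (mon (F.mo g) : RF k l)) := by
  have h3 : (fun g => (mon (F.mo g) : RF k l)) = (tw k (e2 l)) ∘ (fun g => mpoly k (F.mo g)) := by
    funext g; exact (mpoly_eq (F.mo2 g))
  rw [h3]
  exact hli.map' _ (LinearMap.ker_eq_bot.2 (tw_inj _))

lemma pair_card {i j : Fin l} (hij : i < j) : ((({i, j} : Finset (Fin l)).card : ℕ) : ℤ) = 2 := by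
  rw [Finset.card_pair hij.ne]; rfl

lemma ind_span [CharZero k] {D : Fin l → Derivation k (RF k l) (RF k l)} (hD : IsPartialDeriv D)
    (hl : 2 < l)
    (hli : LinearIndependent k (fun g => mpoly k (F.mo g)))
    (hr : Module.rank k (Inv k (fun i : Fin l => -4 - degK (e2 l) i)) ≤ ((Fintype.card κ : ℕ) : Cardinal)) :
    Submodule.span k {α : RF k l | AdmissibleInd D Finset.univ α} =
      Submodule.span k (Set.range (fun g => (mon (F.mo g) : RF k l))) := by
  apply le_antisymm
  · rw [Submodule.span_le]
    intro α hα
    have ho : ∀ i j, i < j → OrdGE (e2 l i j) (scaleJ {i, j} α) := by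
      intro i j hij
      have h1 := adm_ordGE hα.1 {i, j}
      have h2 := adm_lcoeff hα.1 {i, j}
      have h3 := hα.2 {i, j} (Finset.subset_univ _) (Finset.insert_ne_empty _ _) (by
        intro h
        have h4 := congrArg Finset.card h
        rw [Finset.card_pair hij.ne, Finset.card_univ, Fintype.card_fin] at h4
        omega)
      rw [component, sum_two, zero_sub] at h3
      have h5 := (h1.succ h3).succ h2
      rw [pair_card hij] at h5
      exact h5
    obtain ⟨Q, hQ⟩ := pole hD (fD_admissible hD hα.1) hα.1.1 (e2 l) ho
    have := mem_span_mo F hD hli hr (Inv_of_adm hD hα.1 hQ)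
    rwa [← hQ] at this
  · rw [Submodule.span_le]
    rintro _ ⟨g, rfl⟩
    exact Submodule.subset_span (admissibleInd_mon hD (F.goodM g) (F.goodMI g))

lemma ind_finrank [CharZero k] {D : Fin l → Derivation k (RF k l) (RF k l)} (hD : IsPartialDeriv D)
    (hl : 2 < l)
    (hli : LinearIndependent k (fun g => mpoly k (F.mo g)))
    (hr : Module.rank k (Inv k (fun i : Fin l => -4 - degK (e2 l) i)) ≤ ((Fintype.card κ : ℕ) : Cardinal)) :
    Module.finrank k (Submodule.span k {α : RF k l | AdmissibleInd D Finset.univ α}) =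
      Fintype.card κ := by
  rw [ind_span F hD hl hli hr, finrank_span_eq_card (li_mo F hli)]

lemma li_all (hli : LinearIndependent k (fun g => mpoly k (F.mo g))) :
    LinearIndependent k (Sum.elim (fun x => (mon (F.dec x) : RF k l)) (fun g => mon (F.mo g))) := by
  have hm := li_mo F hli
  rw [Fintype.linearIndependent_iff] at hm ⊢
  intro c hc
  rw [Fintype.sum_sum_type] at hc
  simp only [Sum.elim_inl, Sum.elim_inr] at hc
  have h0 : ∀ x, c (Sum.inl x) = 0 := by
    intro x
    have h1 := congrArg (componentL (k := k) (F.jj x) (fun _ => 2) 0) hc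
    rw [map_add, map_sum, map_sum, map_zero, Finset.sum_eq_single x] at h1
    · rw [Finset.sum_eq_zero, add_zero, map_smul] at h1
      · have h2 := component_of_noCross (k := k) (F.dec x) (F.jj x) 0 (F.nc x).1 (F.nc x).2
        rw [if_pos rfl] at h2
        change c (Sum.inl x) • component (F.jj x) (fun _ => 2) 0 (mon (F.dec x)) = 0 at h1
        rw [h2] at h1
        exact (smul_eq_zero.1 h1).resolve_right (mon_ne _)
      · intro g _
        have h2 := component_of_ge (k := k) (F.mo g) (F.jj x) 0 (by norm_num) (F.goodMI g _ (F.j0 x) (F.j1 x))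
        rw [map_smul]
        change c (Sum.inr g) • component (F.jj x) (fun _ => 2) 0 (mon (F.mo g)) = 0
        rw [h2, smul_zero]
    · intro y _ hy
      have h2 := component_of_ge (k := k) (F.dec y) (F.jj x) 0 (by norm_num) (F.gd x y hy.symm)
      rw [map_smul]
      change c (Sum.inl y) • component (F.jj x) (fun _ => 2) 0 (mon (F.dec y)) = 0
      rw [h2, smul_zero]
    · simp
  rintro (x | g)
  · exact h0 x
  · apply hm (fun g => c (Sum.inr g))
    rw [Finset.sum_eq_zero (fun x _ => by rw [h0 x, zero_smul]), zero_add] at hc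
    exact hc

/-- the hypothesis on the coefficients -/
def PairH (k : Type) [Field k] (F : Fam ι κ l) : Prop :=
  ∀ (D : Fin l → Derivation k (RF k l) (RF k l)) (_ : IsPartialDeriv D)
    (α : RF k l) (_ : Admissible D Finset.univ α) (Q : MvPolynomial (Fin l) k)
    (_ : α = am k l Q * mon (e4 l)),
    ∃ c : ι → k, ∀ x i j, i < j → F.dec x i j = -4 → pj k {i, j} (Q - C (c x) * dpoly k (F.dec x)) = 0

lemma adm_span [CharZero k] {D : Fin l → Derivation k (RF k l) (RF k l)} (hD : IsPartialDeriv D)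
    (hP : PairH k F)
    (hli : LinearIndependent k (fun g => mpoly k (F.mo g)))
    (hr : Module.rank k (Inv k (fun i : Fin l => -4 - degK (e2 l) i)) ≤ ((Fintype.card κ : ℕ) : Cardinal)) :
    Submodule.span k {α : RF k l | Admissible D Finset.univ α} =
      Submodule.span k (Set.range (Sum.elim (fun x => (mon (F.dec x) : RF k l)) (fun g => mon (F.mo g)))) := by
  apply le_antisymm
  · rw [Submodule.span_le]
    intro α hα
    obtain ⟨Q, hQ⟩ := pole hD (fD_admissible hD hα) hα.1 (e4 l) (fun i j hij => by
      have h1 := adm_ordGE hα {i, j}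
      rw [pair_card hij] at h1
      exact h1)
    obtain ⟨c, hc⟩ := hP D hD α hα Q hQ
    set β := α - ∑ x, c x • (mon (F.dec x) : RF k l) with hβ
    set Q' := Q - ∑ x, C (c x) * dpoly k (F.dec x) with hQ'
    have hβQ : β = am k l Q' * mon (e4 l) := by
      rw [hβ, hQ', map_sub, sub_mul, ← hQ, map_sum, Finset.sum_mul]
      congr 1
      refine Finset.sum_congr rfl fun x _ => ?_
      rw [map_mul, am_C, mul_assoc, ← dpoly_eq (F.dec4 x), Algebra.smul_def]
    have hQI : Q' ∈ Inv k (fun i => -4 - degK (e4 l) i) := by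
      refine Submodule.sub_mem _ (Inv_of_adm hD hα hQ) (Submodule.sum_mem _ fun x _ => ?_)
      rw [← MvPolynomial.smul_eq_C_mul]
      exact Submodule.smul_mem _ _ (Inv_of_adm hD (admissible_mon hD (F.goodD x)) (dpoly_eq (F.dec4 x)))
    have ho : ∀ i j, i < j → OrdGE (e2 l i j) (scaleJ {i, j} β) := by
      intro i j hij
      obtain ⟨x, hx, hy⟩ := F.dec2 i j hij
      have h1 := pair_ord hD hα hQ (F.goodD x) (F.dec4 x) hij (hc x i j hij hx)
      have h2 : ∀ s : Finset ι, (x ∉ s) → OrdGE (-2) (scaleJ {i, j} (∑ y ∈ s, c y • (mon (F.dec y) : RF k l))) := by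
        intro s
        induction s using Finset.induction_on with
        | empty => intro _; rw [Finset.sum_empty, map_zero]; exact OrdGE.zero _
        | insert a s ha ih =>
          intro hxs
          rw [Finset.sum_insert ha, map_add]
          refine OrdGE.add ?_ (ih (fun h => hxs (Finset.mem_insert_of_mem h)))
          rw [scaleJ_smul]
          apply OrdGE.C_mul
          have h3 := (hasOrd_mon (k := k) {i, j} (F.dec a)).ordGE
          rw [ordJ_pair _ hij] at h3
          exact h3.mono (hy a (fun h => hxs (h ▸ Finset.mem_insert_self _ _)))
      have h4 := h1.sub (h2 (Finset.univ.erase x) (Finset.notMem_erase _ _))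
      rw [← map_sub] at h4
      have h5 : β = α - c x • mon (F.dec x) - ∑ y ∈ Finset.univ.erase x, c y • (mon (F.dec y) : RF k l) := by
        rw [hβ, ← Finset.add_sum_erase _ _ (Finset.mem_univ x)]; ring
      rw [h5]; exact h4
    have hf : fD D β = 0 := by rw [hβQ]; exact (fD_amon hD _ _).2 hQI.1
    obtain ⟨P, hP⟩ := pole hD hf ⟨Q', e4 l, hβQ⟩ (e2 l) ho
    have hd := (dD_amon hD _ _).2 hQI.2
    rw [← hβQ] at hd
    rw [hP] at hd hf
    have hPI : P ∈ Inv k (fun i : Fin l => -4 - degK (e2 l) i) :=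
      ⟨(fD_amon hD _ _).1 hf, (dD_amon hD _ _).1 hd⟩
    have h6 := mem_span_mo F hD hli hr hPI
    rw [← hP] at h6
    have h7 : α = β + ∑ x, c x • (mon (F.dec x) : RF k l) := by rw [hβ]; ring
    rw [h7]
    refine Submodule.add_mem _ (Submodule.span_mono ?_ h6) (Submodule.sum_mem _ fun x _ =>
      Submodule.smul_mem _ _ (Submodule.subset_span ⟨Sum.inl x, rfl⟩))
    rintro _ ⟨g, rfl⟩
    exact ⟨Sum.inr g, rfl⟩
  · rw [Submodule.span_le]
    rintro _ ⟨x | g, rfl⟩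
    · exact Submodule.subset_span (admissible_mon hD (F.goodD x))
    · exact Submodule.subset_span (admissible_mon hD (F.goodM g))

lemma adm_finrank [CharZero k] {D : Fin l → Derivation k (RF k l) (RF k l)} (hD : IsPartialDeriv D)
    (hP : PairH k F)
    (hli : LinearIndependent k (fun g => mpoly k (F.mo g)))
    (hr : Module.rank k (Inv k (fun i : Fin l => -4 - degK (e2 l) i)) ≤ ((Fintype.card κ : ℕ) : Cardinal)) :
    Module.finrank k (Submodule.span k {α : RF k l | Admissible D Finset.univ α}) =
      Fintype.card ι + Fintype.card κ := by
  rw [adm_span F hD hP hli hr, finrank_span_eq_card (li_all F hli), Fintype.card_sum]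

/-- independence from evaluations -/
lemma li_of_pts [CharZero k] {n : ℕ} (e : Fin n → Fin l → Fin l → ℤ) (pt : Fin n → Fin l → ℤ)
    (N M : Matrix (Fin n) (Fin n) ℤ) (p : ℕ) [Fact p.Prime]
    (h1 : ∀ x g, ((p : ℤ) ∣ (∏ i : Fin l, ∏ j : Fin l,
      (if i < j then (pt x i - pt x j) ^ (e g i j + 2).toNat else 1)) - M x g))
    (h2 : ∀ a g, (p : ℤ) ∣ (∑ x, N a x * M x g) - if a = g then 1 else 0) :
    LinearIndependent k (fun g => mpoly k (e g)) := by
  set W : Matrix (Fin n) (Fin n) ℤ := fun x g => ∏ i : Fin l, ∏ j : Fin l,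
      (if i < j then (pt x i - pt x j) ^ (e g i j + 2).toNat else 1) with hW
  have hdet : W.det ≠ 0 := by
    have h3 : W.map (Int.castRingHom (ZMod p)) = M.map (Int.castRingHom (ZMod p)) := by
      ext x g
      have := (ZMod.intCast_zmod_eq_zero_iff_dvd _ p).2 (h1 x g)
      rw [Int.cast_sub, sub_eq_zero] at this
      exact this
    have h4 : N.map (Int.castRingHom (ZMod p)) * M.map (Int.castRingHom (ZMod p)) = 1 := by
      rw [← Matrix.map_mul]
      ext a g
      have := (ZMod.intCast_zmod_eq_zero_iff_dvd _ p).2 (h2 a g)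
      rw [Int.cast_sub, sub_eq_zero] at this
      rw [Matrix.map_apply, Matrix.mul_apply, Matrix.one_apply]
      simpa using this
    intro h0
    have h5 := congrArg Matrix.det h4
    rw [Matrix.det_mul, ← h3, ← RingHom.mapMatrix_apply (Int.castRingHom (ZMod p)) W, ← RingHom.map_det, h0, map_zero, mul_zero, Matrix.det_one] at h5
    exact zero_ne_one h5
  have hk : (W.map (Int.castRingHom k)).det ≠ 0 := by
    rw [← RingHom.mapMatrix_apply, ← RingHom.map_det]
    simpa using hdet
  rw [Fintype.linearIndependent_iff]
  intro c hc
  have h6 : (W.map (Int.castRingHom k)).mulVec c = 0 := by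
    funext x
    have h7 := congrArg (MvPolynomial.eval (fun i => ((pt x i : ℤ) : k))) hc
    rw [map_sum, map_zero] at h7
    rw [Matrix.mulVec, dotProduct, Pi.zero_apply, ← h7]
    refine Finset.sum_congr rfl fun g _ => ?_
    rw [MvPolynomial.smul_eval, mul_comm]
    congr 1
    rw [Matrix.map_apply, hW, mpoly, pm, map_prod, map_prod]
    refine Finset.prod_congr rfl fun i _ => ?_
    rw [map_prod, map_prod]
    refine Finset.prod_congr rfl fun j _ => ?_
    split_ifs <;> simp
  have := Matrix.eq_zero_of_mulVec_eq_zero hk h6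
  intro g
  exact congrFun this g

end PartI
section PartJ

def ix4 : Fin 4 → Fin 4 → Fin 6 := ![![0, 0, 1, 2],
    ![0, 0, 3, 4],
    ![0, 0, 0, 5],
    ![0, 0, 0, 0]]
def tb4 : Fin 3 → Fin 6 → ℤ := ![![0, 0, 2, 2, 0, 0],
    ![1, 0, 1, 1, 0, 1],
    ![2, 0, 0, 0, 0, 2]]
def mo4 (g : Fin 3) (i j : Fin 4) : ℤ := tb4 g (ix4 i j) - 2
def pt4 : Fin 3 → Fin 4 → ℤ := ![![0, 4, 1, 2],
    ![0, 1, 1, 3],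
    ![0, 2, 0, 3]]
def tN4 : Fin 3 → Fin 3 → ℤ := ![![3, 1, 3],
    ![3, 0, 2],
    ![0, 4, 0]]
def tM4 : Fin 3 → Fin 3 → ℤ := ![![1, 1, 1],
    ![0, 0, 4],
    ![1, 4, 1]]
lemma li4 [CharZero k] : LinearIndependent k (fun g => mpoly k (mo4 g)) := by
  have : Fact (Nat.Prime 5) := ⟨by norm_num⟩
  refine li_of_pts mo4 pt4 tN4 tM4 5 ?_ ?_
  · decide +kernel
  · decide +kernel

def a4 : Fin 3 → Fin 4 := ![0, 0, 0]
def b4 : Fin 3 → Fin 4 := ![1, 2, 3]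
def c4 : Fin 3 → Fin 4 := ![2, 1, 1]
def d4 : Fin 3 → Fin 4 := ![3, 3, 2]
def dec4 (x : Fin 3) (i j : Fin 4) : ℤ :=
  if (i = a4 x ∧ j = b4 x) ∨ (i = c4 x ∧ j = d4 x) then -4 else 0

def fam4 : Fam (Fin 3) (Fin 3) 4 where
  dec := dec4
  mo := mo4
  jj := fun x => {a4 x, b4 x}
  goodD := by unfold GoodK NoCross; decide +kernel
  dec4 := by decide +kernel
  dec2 := by decide +kernel
  goodM := by unfold GoodK NoCross; decide +kernel
  goodMI := by unfold GoodI; decide +kernel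
  mo2 := by decide +kernel
  j0 := by decide +kernel
  j1 := by decide +kernel
  nc := by unfold NoCross; decide +kernel
  gd := by decide +kernel

def ix5 : Fin 5 → Fin 5 → Fin 10 := ![![0, 0, 1, 2, 3],
    ![0, 0, 4, 5, 6],
    ![0, 0, 0, 7, 8],
    ![0, 0, 0, 0, 9],
    ![0, 0, 0, 0, 0]]
def tb5 : Fin 16 → Fin 10 → ℤ := ![![0, 0, 0, 4, 2, 2, 0, 2, 0, 0],
    ![0, 0, 1, 3, 3, 1, 0, 1, 0, 1],
    ![0, 0, 2, 2, 4, 0, 0, 0, 0, 2],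
    ![1, 0, 0, 3, 1, 1, 1, 3, 0, 0],
    ![1, 0, 0, 3, 2, 1, 0, 2, 0, 1],
    ![1, 0, 1, 2, 3, 0, 0, 1, 0, 2],
    ![1, 1, 1, 1, 3, 0, 0, 0, 0, 3],
    ![2, 0, 0, 2, 0, 0, 2, 4, 0, 0],
    ![2, 0, 0, 2, 1, 0, 1, 3, 0, 1],
    ![2, 0, 0, 2, 2, 0, 0, 2, 0, 2],
    ![2, 1, 0, 1, 2, 0, 0, 1, 0, 3],
    ![2, 2, 0, 0, 2, 0, 0, 0, 0, 4],
    ![3, 0, 0, 1, 0, 0, 1, 3, 1, 1],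
    ![3, 0, 0, 1, 1, 0, 0, 2, 1, 2],
    ![3, 1, 0, 0, 1, 0, 0, 1, 1, 3],
    ![4, 0, 0, 0, 0, 0, 0, 2, 2, 2]]
def mo5 (g : Fin 16) (i j : Fin 5) : ℤ := tb5 g (ix5 i j) - 2
def pt5 : Fin 16 → Fin 5 → ℤ := ![![0, 0, 8, 3, 8],
    ![0, 6, 5, 0, 10],
    ![0, 1, 8, 10, 6],
    ![0, 10, 1, 4, 10],
    ![0, 4, 2, 7, 0],
    ![0, 3, 10, 10, 1],
    ![0, 6, 1, 10, 7],
    ![0, 4, 10, 8, 7],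
    ![0, 6, 1, 9, 7],
    ![0, 1, 2, 6, 9],
    ![0, 3, 2, 8, 4],
    ![0, 6, 8, 4, 7],
    ![0, 10, 8, 3, 9],
    ![0, 5, 7, 1, 0],
    ![0, 10, 5, 4, 0],
    ![0, 8, 10, 7, 4]]
def tN5 : Fin 16 → Fin 16 → ℤ := ![![7, 1, 10, 8, 9, 1, 6, 1, 7, 8, 3, 8, 1, 5, 10, 3],
    ![9, 5, 6, 10, 1, 4, 7, 7, 9, 8, 0, 8, 0, 7, 7, 5],
    ![5, 4, 7, 2, 3, 3, 1, 6, 2, 0, 8, 0, 10, 2, 8, 2],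
    ![8, 0, 1, 10, 8, 2, 7, 8, 0, 0, 10, 5, 9, 10, 0, 6],
    ![9, 10, 7, 7, 6, 8, 4, 9, 6, 5, 7, 5, 6, 2, 7, 4],
    ![6, 9, 0, 2, 2, 9, 0, 3, 7, 0, 7, 8, 3, 9, 2, 4],
    ![7, 10, 1, 5, 0, 5, 8, 4, 5, 0, 9, 0, 3, 6, 2, 5],
    ![5, 6, 5, 6, 4, 9, 1, 4, 9, 8, 5, 5, 1, 6, 6, 2],
    ![4, 4, 7, 3, 4, 10, 4, 6, 7, 6, 4, 6, 0, 3, 0, 3],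
    ![0, 0, 6, 5, 9, 1, 4, 4, 0, 4, 7, 1, 10, 5, 8, 4],
    ![3, 6, 3, 5, 5, 3, 5, 10, 1, 8, 3, 7, 4, 5, 4, 5],
    ![0, 0, 0, 0, 6, 0, 0, 0, 0, 0, 0, 0, 0, 8, 10, 0],
    ![2, 2, 9, 7, 10, 5, 0, 0, 1, 1, 8, 10, 5, 3, 3, 8],
    ![2, 0, 2, 8, 6, 8, 7, 3, 0, 5, 5, 1, 4, 1, 5, 6],
    ![0, 0, 0, 0, 6, 0, 0, 0, 0, 0, 0, 0, 0, 5, 4, 0],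
    ![0, 0, 0, 0, 8, 0, 0, 0, 0, 0, 0, 0, 0, 2, 10, 0]]
def tM5 : Fin 16 → Fin 16 → ℤ := ![![4, 7, 4, 0, 0, 0, 0, 0, 0, 0, 0, 0, 0, 0, 0, 0],
    ![9, 0, 0, 4, 2, 0, 0, 3, 7, 9, 2, 9, 1, 6, 5, 4],
    ![5, 7, 1, 7, 9, 6, 6, 1, 6, 3, 3, 3, 6, 3, 3, 3],
    ![9, 2, 9, 0, 2, 9, 4, 0, 0, 9, 4, 3, 0, 2, 7, 9],
    ![0, 0, 0, 0, 0, 0, 0, 0, 0, 0, 0, 9, 0, 0, 6, 4],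
    ![0, 0, 1, 0, 0, 0, 4, 0, 0, 0, 0, 5, 0, 0, 0, 0],
    ![4, 5, 9, 6, 10, 7, 7, 9, 4, 3, 3, 3, 5, 1, 1, 4],
    ![4, 5, 9, 1, 1, 4, 6, 3, 3, 3, 10, 4, 7, 7, 5, 9],
    ![3, 2, 5, 9, 3, 2, 7, 5, 9, 3, 5, 1, 3, 1, 9, 4],
    ![9, 2, 9, 2, 5, 6, 1, 9, 6, 4, 8, 5, 1, 8, 5, 5],
    ![5, 5, 5, 1, 8, 8, 1, 9, 6, 4, 6, 9, 2, 5, 2, 9],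
    ![9, 7, 3, 3, 1, 2, 3, 1, 4, 5, 2, 3, 3, 1, 7, 9],
    ![3, 5, 1, 8, 5, 1, 7, 3, 6, 1, 7, 5, 4, 8, 1, 9],
    ![0, 0, 0, 0, 0, 0, 0, 0, 0, 0, 0, 5, 0, 0, 2, 3],
    ![0, 0, 0, 0, 0, 0, 0, 0, 0, 0, 0, 5, 0, 0, 8, 4],
    ![9, 7, 3, 2, 10, 9, 6, 9, 1, 5, 7, 1, 5, 3, 2, 4]]
lemma li5 [CharZero k] : LinearIndependent k (fun g => mpoly k (mo5 g)) := by
  have : Fact (Nat.Prime 11) := ⟨by norm_num⟩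
  refine li_of_pts mo5 pt5 tN5 tM5 11 ?_ ?_
  · decide +kernel
  · decide +kernel

def a5 : Fin 10 → Fin 5 := ![0, 0, 0, 0, 1, 1, 1, 2, 2, 3]
def b5 : Fin 10 → Fin 5 := ![1, 2, 3, 4, 2, 3, 4, 3, 4, 4]
def dec5 (x : Fin 10) (i j : Fin 5) : ℤ :=
  if i = a5 x ∧ j = b5 x then -4
  else if i ≠ a5 x ∧ i ≠ b5 x ∧ j ≠ a5 x ∧ j ≠ b5 x then -2 else 0

def fam5 : Fam (Fin 10) (Fin 16) 5 where
  dec := dec5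
  mo := mo5
  jj := fun x => {a5 x, b5 x}
  goodD := by unfold GoodK NoCross; decide +kernel
  dec4 := by decide +kernel
  dec2 := by decide +kernel
  goodM := by unfold GoodK NoCross; decide +kernel
  goodMI := by unfold GoodI; decide +kernel
  mo2 := by decide +kernel
  j0 := by decide +kernel
  j1 := by decide +kernel
  nc := by unfold NoCross; decide +kernel
  gd := by decide +kernel
end PartJ
section PartK

lemma pairH5 [CharZero k] : PairH k fam5 := by
  intro D hD α hα Q hQ
  have h1 : ∀ x, a5 x < b5 x := by decide +kernel
  have h2 : ∀ x, dec5 x (a5 x) (b5 x) = -4 := by decide +kernel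
  have h3 : ∀ x i j, i < j → dec5 x i j = -4 → i = a5 x ∧ j = b5 x := by decide +kernel
  have h4 : ∀ x s, s ∉ ({a5 x, b5 x} : Finset (Fin 5)) →
      ∃ t u, s ≠ t ∧ s ≠ u ∧ ∀ r, r ≠ s → r ∈ ({a5 x, b5 x} : Finset (Fin 5)) ∨ r = t ∨ r = u := by
    decide +kernel
  have h5 : ∀ x, ∃ c : k, pj k {a5 x, b5 x} (Q - C c * dpoly k (dec5 x)) = 0 := fun x =>
    pair_coeff hD hα hQ (fam5.goodD x) (fam5.dec4 x) (h1 x) (h2 x) (fam5.nc x).1 (h4 x)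
  choose c hc using h5
  refine ⟨c, fun x i j hij hx => ?_⟩
  obtain ⟨rfl, rfl⟩ := h3 x i j hij hx
  exact hc x

lemma pairH4 [CharZero k] : PairH k fam4 := by
  intro D hD α hα Q hQ
  have h1 : ∀ x, a4 x < b4 x := by decide +kernel
  have h1' : ∀ x, c4 x < d4 x := by decide +kernel
  have h2 : ∀ x, dec4 x (a4 x) (b4 x) = -4 := by decide +kernel
  have h2' : ∀ x, dec4 x (c4 x) (d4 x) = -4 := by decide +kernel
  have h3 : ∀ x i j, i < j → dec4 x i j = -4 → (i = a4 x ∧ j = b4 x) ∨ (i = c4 x ∧ j = d4 x) := by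
    decide +kernel
  have h4 : ∀ x s, s ∉ ({a4 x, b4 x} : Finset (Fin 4)) →
      ∃ t u, s ≠ t ∧ s ≠ u ∧ ∀ r, r ≠ s → r ∈ ({a4 x, b4 x} : Finset (Fin 4)) ∨ r = t ∨ r = u := by
    decide +kernel
  have h4' : ∀ x s, s ∉ ({c4 x, d4 x} : Finset (Fin 4)) →
      ∃ t u, s ≠ t ∧ s ≠ u ∧ ∀ r, r ≠ s → r ∈ ({c4 x, d4 x} : Finset (Fin 4)) ∨ r = t ∨ r = u := by
    decide +kernel
  have hn : ∀ x, NoCross (dec4 x) {c4 x, d4 x} := by unfold NoCross; decide +kernel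
  have hz : ∀ x i j, i < j → (i ∈ ({a4 x, b4 x} : Finset (Fin 4)) ↔ j ∈ ({a4 x, b4 x} : Finset (Fin 4))) →
    (dec4 x i j + 4).toNat = 0 := by decide +kernel
  have hcd : ∀ x i, i ∈ ({c4 x, d4 x} : Finset (Fin 4)) → i ∉ ({a4 x, b4 x} : Finset (Fin 4)) := by
    decide +kernel
  have h5 : ∀ x, ∃ c : k, pj k {a4 x, b4 x} (Q - C c * dpoly k (dec4 x)) = 0 ∧
      pj k {c4 x, d4 x} (Q - C c * dpoly k (dec4 x)) = 0 := by
    intro x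
    obtain ⟨c, hc⟩ := pair_coeff hD hα hQ (fam4.goodD x) (fam4.dec4 x) (h1 x) (h2 x) (fam4.nc x).1 (h4 x)
    obtain ⟨c', hc'⟩ := pair_coeff hD hα hQ (fam4.goodD x) (fam4.dec4 x) (h1' x) (h2' x) (hn x) (h4' x)
    change pj k {a4 x, b4 x} (Q - C c * dpoly k (dec4 x)) = 0 at hc
    change pj k {c4 x, d4 x} (Q - C c' * dpoly k (dec4 x)) = 0 at hc'
    refine ⟨c, hc, ?_⟩
    suffices h : c = c' by rw [h]; exact hc'
    let v : Fin 4 → k := fun i => if i ∈ ({a4 x, b4 x} : Finset (Fin 4)) then 1 else 0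
    have hv : ∀ P : MvPolynomial (Fin 4) k, eval v (pj k {c4 x, d4 x} P) = eval v P := by
      intro P
      induction P using MvPolynomial.induction_on with
      | C a => simp [pj]
      | add p q hp hq => simp only [map_add, hp, hq]
      | mul_X p i hp =>
        rw [map_mul, map_mul, map_mul, hp, pj_X]
        split_ifs with h
        · have := hcd x i h
          simp only [map_zero, eval_X, v, if_neg this]
        · rfl
    have e1 : eval v Q = c' * eval v (dpoly k (dec4 x)) := by
      have := congrArg (eval v) hc'
      rw [hv, map_zero, map_sub, map_mul, eval_C, sub_eq_zero] at this
      exact this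
    have hI : Q - C c * dpoly k (dec4 x) ∈ Inv k (fun i => -4 - degK (e4 4) i) := by
      refine Submodule.sub_mem _ (Inv_of_adm hD hα hQ) ?_
      rw [← MvPolynomial.smul_eq_C_mul]
      exact Submodule.smul_mem _ _
        (Inv_of_adm hD (admissible_mon hD (fam4.goodD x)) (dpoly_eq (fam4.dec4 x)))
    have e2 : eval v Q = c * eval v (dpoly k (dec4 x)) := by
      obtain ⟨R, hR⟩ := dvd_of_pj hI.1 hc
      have := congrArg (eval v) hR
      rw [map_mul, map_sub, map_sub, map_mul, eval_C, eval_X, eval_X] at this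
      have h6 : v (a4 x) - v (b4 x) = 0 := by simp [v]
      rw [h6, zero_mul, sub_eq_zero] at this
      exact this
    have e3 : eval v (dpoly k (dec4 x)) ≠ 0 := by
      rw [dpoly, pm, map_prod]
      refine Finset.prod_ne_zero_iff.2 fun i _ => ?_
      rw [map_prod]
      refine Finset.prod_ne_zero_iff.2 fun j _ => ?_
      split_ifs with hij
      · by_cases h : i ∈ ({a4 x, b4 x} : Finset (Fin 4)) ↔ j ∈ ({a4 x, b4 x} : Finset (Fin 4))
        · rw [hz x i j hij h]; simp
        · rw [map_pow, map_sub, eval_X, eval_X]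
          apply pow_ne_zero
          simp only [v]
          by_cases hi : i ∈ ({a4 x, b4 x} : Finset (Fin 4))
          · have hj : j ∉ ({a4 x, b4 x} : Finset (Fin 4)) := fun hj => h ⟨fun _ => hj, fun _ => hi⟩
            rw [if_pos hi, if_neg hj]; simp
          · have hj : j ∈ ({a4 x, b4 x} : Finset (Fin 4)) := by
              by_contra hj
              exact h ⟨fun h => absurd h hi, fun h => absurd h hj⟩
            rw [if_neg hi, if_pos hj]; simp
      · simp
    exact mul_right_cancel₀ e3 (e2.symm.trans e1)
  choose c hc hc' using h5
  refine ⟨c, fun x i j hij hx => ?_⟩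
  rcases h3 x i j hij hx with ⟨rfl, rfl⟩ | ⟨rfl, rfl⟩
  · exact hc x
  · exact hc' x

lemma rk4 [CharZero k] : Module.rank k (Inv k (fun i : Fin 4 => -4 - degK (e2 4) i)) ≤
    ((Fintype.card (Fin 3) : ℕ) : Cardinal) := by
  have h : (fun i : Fin 4 => -4 - degK (e2 4) i) = fun _ => 2 := by
    funext i; revert i; decide +kernel
  rw [h, Fintype.card_fin]; exact rank4

lemma rk5 [CharZero k] : Module.rank k (Inv k (fun i : Fin 5 => -4 - degK (e2 5) i)) ≤
    ((Fintype.card (Fin 16) : ℕ) : Cardinal) := by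
  have h : (fun i : Fin 5 => -4 - degK (e2 5) i) = fun _ => 4 := by
    funext i; revert i; decide +kernel
  rw [h, Fintype.card_fin]; exact rank5

end PartK

end Griess

namespace Griess

/-- `dim R⁴₀ = 3`, `dim R⁴ = 6`, `dim R⁵₀ = 16`, `dim R⁵ = 26`
(the sets of (indecomposable) admissible functions are `k`-subspaces, so taking
the span does not change them). -/
theorem statement7 {k : Type} [Field k] [CharZero k]
    (D4 : Fin 4 → Derivation k (RF k 4) (RF k 4)) (h4 : IsPartialDeriv D4)
    (D5 : Fin 5 → Derivation k (RF k 5) (RF k 5)) (h5 : IsPartialDeriv D5) :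
    Module.finrank k
      ↥(Submodule.span k {α : RF k 4 | AdmissibleInd D4 Finset.univ α}) = 3 ∧
    Module.finrank k
      ↥(Submodule.span k {α : RF k 4 | Admissible D4 Finset.univ α}) = 6 ∧
    Module.finrank k
      ↥(Submodule.span k {α : RF k 5 | AdmissibleInd D5 Finset.univ α}) = 16 ∧
    Module.finrank k
      ↥(Submodule.span k {α : RF k 5 | Admissible D5 Finset.univ α}) = 26 := by
  refine ⟨?_, ?_, ?_, ?_⟩
  · exact ind_finrank fam4 h4 (by norm_num) li4 rk4
  · exact adm_finrank fam4 h4 pairH4 li4 rk4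
  · exact ind_finrank fam5 h5 (by norm_num) li5 rk5
  · exact adm_finrank fam5 h5 pairH5 li5 rk5

end Griess
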